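/- Let s₀ > d be an integer, m₁,m₂ ∈ ℝ, a ∈ 𝒩^{m₁}_{s₀+4} and b ∈ 𝒩^{m₂}_{s₀+4}. Then T_a ∘ T_b = T_{ab} + (1/(2i)) T_{{a,b}} − (1/8) T_{σ(a,b)} + R(a,b), where the remainder satisfies, for any s ∈ ℝ and h ∈ H^s(𝕋^d;ℂ): ‖R(a,b)h‖_{H^{s−m₁−m₂+3}} ≤ C |a|_{𝒩^{m₁}_{s₀+4}} |b|_{𝒩^{m₂}_{s₀+4}} ‖h‖_{H^s}. -/

import Mathlib

open MeasureTheory Complex Real Filter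

noncomputable section

namespace QLNLS

/-- Points of `ℝ^d` (resp. the torus `𝕋^d = (ℝ/2πℤ)^d`, via `2π`-periodic functions). -/
abbrev Vec (d : ℕ) := Fin d → ℝ
/-- Frequency lattice `ℤ^d`. -/
abbrev Zd (d : ℕ) := Fin d → ℤ
/-- Functions on the torus. -/
abbrev Fn (d : ℕ) := Vec d → ℂ
/-- Sequences of Fourier coefficients. -/
abbrev Seq (d : ℕ) := Zd d → ℂ
/-- Symbols `a(x, ξ)`. -/
abbrev Sym (d : ℕ) := Vec d → Vec d → ℂ

variable {d : ℕ}

/-- Euclidean norm `|ξ|`. -/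
def rnorm (ξ : Vec d) : ℝ := Real.sqrt (∑ i, (ξ i) ^ 2)

/-- Euclidean norm `|n|` of a lattice point. -/
def znorm (n : Zd d) : ℝ := Real.sqrt (∑ i, ((n i : ℝ)) ^ 2)

/-- Japanese bracket `⟨n⟩ = (1+|n|²)^{1/2}`. -/
def jb (n : Zd d) : ℝ := Real.sqrt (1 + ∑ i, ((n i : ℝ)) ^ 2)

/-- Japanese bracket `⟨ξ⟩` for real frequencies. -/
def jbR (ξ : Vec d) : ℝ := Real.sqrt (1 + ∑ i, (ξ i) ^ 2)

/-- `2π`-periodicity in every coordinate. -/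
def Periodic2pi (u : Fn d) : Prop :=
  ∀ (x : Vec d) (n : Zd d), u (fun i => x i + 2 * π * (n i : ℝ)) = u x

/-- A fundamental domain of the torus. -/
def box (d : ℕ) : Set (Vec d) := Set.univ.pi fun _ : Fin d => Set.Ioc (0 : ℝ) (2 * π)

/-- Fourier coefficient `û(n) = (2π)^{-d/2} ∫ u(x) e^{-i n·x} dx`. -/
def fCoeff (u : Fn d) (n : Zd d) : ℂ :=
  (((2 * π : ℝ) ^ (-(d : ℝ) / 2) : ℝ) : ℂ) *
    ∫ x in box d, u x * Complex.exp (-Complex.I * ((∑ i, (n i : ℝ) * x i : ℝ) : ℂ))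

/-- Squared Sobolev norm of a coefficient sequence. -/
def hsNormSq (s : ℝ) (c : Seq d) : ℝ := ∑' n : Zd d, jb n ^ (2 * s) * ‖c n‖ ^ 2

/-- Sobolev norm of a coefficient sequence. -/
def hsNorm (s : ℝ) (c : Seq d) : ℝ := Real.sqrt (hsNormSq s c)

/-- Membership of a coefficient sequence in `H^s`. -/
def InHsSeq (s : ℝ) (c : Seq d) : Prop :=
  Summable fun n : Zd d => jb n ^ (2 * s) * ‖c n‖ ^ 2

/-- `H^s` norm of a function on the torus. -/
def sobNorm (s : ℝ) (u : Fn d) : ℝ := hsNorm s (fCoeff u)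

/-- `u ∈ H^s(𝕋^d;ℂ)`: `u` is `2π`-periodic, its Fourier coefficients are `H^s`-summable,
and `u` is represented by its Fourier series. -/
def InHs (s : ℝ) (u : Fn d) : Prop :=
  Periodic2pi u ∧ InHsSeq s (fCoeff u) ∧
    ∀ x : Vec d, HasSum
      (fun n : Zd d => (((2 * π : ℝ) ^ (-(d : ℝ) / 2) : ℝ) : ℂ) * fCoeff u n *
        Complex.exp (Complex.I * ((∑ i, (n i : ℝ) * x i : ℝ) : ℂ))) (u x)

/-- Partial derivative `∂_{x_i}` of a function. -/
def pdF (i : Fin d) (u : Fn d) : Fn d := fun x => fderiv ℝ u x (Pi.single i 1)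

/-- Partial derivative `∂_{x_i}` of a symbol. -/
def pdx (i : Fin d) (a : Sym d) : Sym d := fun x ξ => fderiv ℝ (fun y => a y ξ) x (Pi.single i 1)

/-- Partial derivative `∂_{ξ_i}` of a symbol. -/
def pdxi (i : Fin d) (a : Sym d) : Sym d := fun x ξ => fderiv ℝ (fun η => a x η) ξ (Pi.single i 1)

/-- Iterated mixed partial derivative of a symbol along a list of directions
(`Sum.inl j` = `∂_{x_j}`, `Sum.inr j` = `∂_{ξ_j}`). -/
def mderiv (L : List (Fin d ⊕ Fin d)) (a : Sym d) : Sym d :=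
  L.foldr (fun i b => match i with | Sum.inl j => pdx j b | Sum.inr j => pdxi j b) a

/-- Number of `ξ`-derivatives in a list of directions. -/
def nXi (L : List (Fin d ⊕ Fin d)) : ℕ := (L.filter fun i => i.isRight).length

/-- The set of values whose supremum is the symbol seminorm `|a|_{𝒩^m_s}`. -/
def symVals (m : ℝ) (s : ℕ) (a : Sym d) : Set ℝ :=
  { r | ∃ (L : List (Fin d ⊕ Fin d)) (x ξ : Vec d), L.length ≤ s ∧
        r = jbR ξ ^ (-m + (nXi L : ℝ)) * ‖mderiv L a x ξ‖ }

/-- Symbol seminorm `|a|_{𝒩^m_s}`. -/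
def symNorm (m : ℝ) (s : ℕ) (a : Sym d) : ℝ := sSup (symVals m s a)

/-- Membership in the symbol class `𝒩^m_s`. -/
def InSymClass (m : ℝ) (s : ℕ) (a : Sym d) : Prop :=
  ContDiff ℝ (s : ℕ∞) (Function.uncurry a) ∧ (∀ ξ, Periodic2pi fun x => a x ξ) ∧
    BddAbove (symVals m s a)

/-- Poisson bracket `{a,b}`. -/
def poisson (a b : Sym d) : Sym d := fun x ξ =>
  ∑ j, (pdxi j a x ξ * pdx j b x ξ - pdx j a x ξ * pdxi j b x ξ)

/-- The second-order bracket `σ(a,b)`. -/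
def sigmaB (a b : Sym d) : Sym d := fun x ξ =>
  ∑ j, ∑ k,
    (pdxi j (pdxi k a) x ξ * pdx j (pdx k b) x ξ
      - 2 * pdx j (pdxi k a) x ξ * pdxi j (pdx k b) x ξ
      + pdx j (pdx k a) x ξ * pdxi j (pdxi k b) x ξ)

/-- An admissible cut-off function `χ`. -/
structure IsCutoff (χ : ℝ → ℝ) : Prop where
  smooth : ContDiff ℝ (⊤ : ℕ∞) χ
  mem : ∀ t : ℝ, χ t ∈ Set.Icc (0 : ℝ) 1
  eq_one : ∀ t : ℝ, |t| ≤ 5 / 4 → χ t = 1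
  eq_zero : ∀ t : ℝ, 8 / 5 ≤ |t| → χ t = 0

/-- `x`-Fourier coefficient `â(η, ξ)` of a symbol. -/
def symCoeff (a : Sym d) (η : Zd d) (ξ : Vec d) : ℂ := fCoeff (fun x => a x ξ) η

/-- Midpoint `(j+k)/2` of two lattice points. -/
def mid (j k : Zd d) : Vec d := fun i => ((j i + k i : ℤ) : ℝ) / 2

/-- The paradifferential cut-off factor `χ_ε(|j-k|/⟨j+k⟩) = χ(|j-k|/(ε⟨j+k⟩))`. -/
def cutFactor (χ : ℝ → ℝ) (ε : ℝ) (j k : Zd d) : ℝ :=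
  χ (znorm (j - k) / (ε * jb (j + k)))

/-- The Weyl paradifferential operator `T_a`, acting on Fourier coefficient sequences:
`(T_a h)^(j) = (2π)^{-d/2} Σ_k χ_ε(|j-k|/⟨j+k⟩) â(j-k,(j+k)/2) ĥ(k)`. -/
def paraC (χ : ℝ → ℝ) (ε : ℝ) (a : Sym d) (c : Seq d) : Seq d := fun j =>
  (((2 * π : ℝ) ^ (-(d : ℝ) / 2) : ℝ) : ℂ) *
    ∑' k : Zd d, ((cutFactor χ ε j k : ℝ) : ℂ) * symCoeff a (j - k) (mid j k) * c k

/-- The operator `R_a` built from the difference of two cut-offs. -/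
def remC (χ : ℝ → ℝ) (ε₁ ε₂ : ℝ) (a : Sym d) (c : Seq d) : Seq d := fun j =>
  (((2 * π : ℝ) ^ (-(d : ℝ) / 2) : ℝ) : ℂ) *
    ∑' k : Zd d, ((cutFactor χ ε₁ j k - cutFactor χ ε₂ j k : ℝ) : ℂ) *
      symCoeff a (j - k) (mid j k) * c k

/-- Wirtinger derivative `∂_{y_j} = (∂_{Re y_j} - i ∂_{Im y_j})/2`. -/
def wdP {n : ℕ} (j : Fin n) (G : (Fin n → ℂ) → ℂ) : (Fin n → ℂ) → ℂ := fun y =>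
  (fderiv ℝ G y (Pi.single j 1) - Complex.I * fderiv ℝ G y (Pi.single j Complex.I)) / 2

/-- Wirtinger derivative `∂_{ȳ_j} = (∂_{Re y_j} + i ∂_{Im y_j})/2`. -/
def wdM {n : ℕ} (j : Fin n) (G : (Fin n → ℂ) → ℂ) : (Fin n → ℂ) → ℂ := fun y =>
  (fderiv ℝ G y (Pi.single j 1) + Complex.I * fderiv ℝ G y (Pi.single j Complex.I)) / 2

/-- The 1-jet `(u, ∇u)` of a function, as a point of `ℂ^{d+1}`. -/
def jet (u : Fn d) (x : Vec d) : Fin (d + 1) → ℂ :=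
  Fin.cons (u x) fun j => pdF j u x

/-- The Hamiltonian nonlinearity
`P(u) = (∂_{ū}F)(u,∇u) - Σ_j ∂_{x_j}((∂_{ū_{x_j}}F)(u,∇u))`. -/
def Pop (F : (Fin (d + 1) → ℂ) → ℂ) (u : Fn d) : Fn d := fun x =>
  wdM 0 F (jet u x) - ∑ j, pdF j (fun y => wdM (Fin.succ j) F (jet u y)) x

/-- `F ∈ C^∞(ℂ^{d+1};ℝ)` in the real sense, with a zero of order at least 3 at the origin. -/
def GoodF (d : ℕ) (F : (Fin (d + 1) → ℂ) → ℂ) : Prop :=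
  ContDiff ℝ (⊤ : ℕ∞) F ∧ (∀ y, (F y).im = 0) ∧ ∀ k : ℕ, k ≤ 2 → iteratedFDeriv ℝ k F 0 = 0

/-- Global ellipticity (Hypothesis 1.1). -/
def Elliptic (d : ℕ) (F : (Fin (d + 1) → ℂ) → ℂ) : Prop :=
  ∃ c₁ > (0 : ℝ), ∃ c₂ > (0 : ℝ), ∀ (ξ : Vec d) (y : Fin (d + 1) → ℂ),
    (c₁ * ∑ i, (ξ i) ^ 2 ≤
      (∑ j, ∑ k, ((ξ j * ξ k : ℝ) : ℂ) *
        ((if j = k then 1 else 0) + wdP (Fin.succ j) (wdM (Fin.succ k) F) y)).re) ∧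
    (ξ ≠ 0 → c₂ ≤
      (1 + (∑ j, ∑ k, ((ξ j * ξ k : ℝ) : ℂ) * wdP (Fin.succ j) (wdM (Fin.succ k) F) y).re
            / ∑ i, (ξ i) ^ 2) ^ 2
        - ‖∑ j, ∑ k, ((ξ j * ξ k : ℝ) : ℂ) * wdM (Fin.succ j) (wdM (Fin.succ k) F) y‖ ^ 2
            / (∑ i, (ξ i) ^ 2) ^ 2)

/-- The symbol `a₂(x,ξ) = Σ_{j,k} (∂_{ū_{x_k}}∂_{u_{x_j}}F)(u,∇u) ξ_j ξ_k`. -/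
def a2sym (F : (Fin (d + 1) → ℂ) → ℂ) (u : Fn d) : Sym d := fun x ξ =>
  ∑ j, ∑ k, ((ξ j * ξ k : ℝ) : ℂ) * wdP (Fin.succ j) (wdM (Fin.succ k) F) (jet u x)

/-- The symbol `b₂(x,ξ) = Σ_{j,k} (∂_{ū_{x_k}}∂_{ū_{x_j}}F)(u,∇u) ξ_j ξ_k`. -/
def b2sym (F : (Fin (d + 1) → ℂ) → ℂ) (u : Fn d) : Sym d := fun x ξ =>
  ∑ j, ∑ k, ((ξ j * ξ k : ℝ) : ℂ) * wdM (Fin.succ j) (wdM (Fin.succ k) F) (jet u x)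

/-- The symbol `a₁(x,ξ) = (i/2) Σ_j ((∂_{ū}∂_{u_{x_j}}F) - (∂_u∂_{ū_{x_j}}F))(u,∇u) ξ_j`. -/
def a1sym (F : (Fin (d + 1) → ℂ) → ℂ) (u : Fn d) : Sym d := fun x ξ =>
  Complex.I / 2 * ∑ j, ((ξ j : ℝ) : ℂ) *
    (wdM 0 (wdP (Fin.succ j) F) (jet u x) - wdP 0 (wdM (Fin.succ j) F) (jet u x))

/-- Conjugation of a coefficient sequence: the sequence of `conj u`. -/
def starSeq (c : Seq d) : Seq d := fun n => (starRingEnd ℂ) (c (-n))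

/-- Pointwise conjugate of a function. -/
def starF (u : Fn d) : Fn d := fun x => (starRingEnd ℂ) (u x)

/-- Pointwise conjugate of a symbol. -/
def starSym (a : Sym d) : Sym d := fun x ξ => (starRingEnd ℂ) (a x ξ)

/-- The symbol `(x,ξ) ↦ conj (a(x,-ξ))`. -/
def flipSym (a : Sym d) : Sym d := fun x ξ => (starRingEnd ℂ) (a x (-ξ))

/-- The matrix `E = diag(1,-1)` as a sign vector. -/
def Em : Fin 2 → ℂ := ![1, -1]

/-- `Op^BW` of a 2×2 matrix of symbols, acting on vectors of coefficient sequences. -/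
def opBWmat (χ : ℝ → ℝ) (ε : ℝ) (A : Fin 2 → Fin 2 → Sym d) (C : Fin 2 → Seq d) :
    Fin 2 → Seq d := fun σ j => ∑ τ, paraC χ ε (A σ τ) (C τ) j

/-- The symbol `|ξ|²`. -/
def sq2sym (d : ℕ) : Sym d := fun _ ξ => (((rnorm ξ) ^ 2 : ℝ) : ℂ)

/-- The matrix of symbols `A₂(x,ξ)`. -/
def A2mat (F : (Fin (d + 1) → ℂ) → ℂ) (u : Fn d) : Fin 2 → Fin 2 → Sym d :=
  ![![a2sym F u, b2sym F u], ![flipSym (b2sym F u), a2sym F u]]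

/-- The matrix of symbols `A₁(x,ξ)`. -/
def A1mat (F : (Fin (d + 1) → ℂ) → ℂ) (u : Fn d) : Fin 2 → Fin 2 → Sym d :=
  ![![a1sym F u, 0], ![0, flipSym (a1sym F u)]]

/-- The full matrix of symbols `|ξ|²𝟙 + A₂(x,ξ) + A₁(x,ξ)`. -/
def sysSym (F : (Fin (d + 1) → ℂ) → ℂ) (u : Fn d) : Fin 2 → Fin 2 → Sym d := fun σ τ =>
  fun x ξ => (if σ = τ then sq2sym d x ξ else 0) + A2mat F u σ τ x ξ + A1mat F u σ τ x ξ

/-- `H^s` norm of a vector of coefficient sequences. -/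
def hsNormVec (s : ℝ) (C : Fin 2 → Seq d) : ℝ := hsNorm s (C 0) + hsNorm s (C 1)

/-- Membership of a vector of coefficient sequences in `H^s`. -/
def InHsVec (s : ℝ) (C : Fin 2 → Seq d) : Prop := InHsSeq s (C 0) ∧ InHsSeq s (C 1)

/-- The `L²` pairing `(U,V) = ∫ (u v̄ + ū v)`, at the level of Fourier coefficients. -/
def pairL2 (C E : Fin 2 → Seq d) : ℂ :=
  ∑' n : Zd d, (C 0 n * (starRingEnd ℂ) (E 0 n) + C 1 n * (starRingEnd ℂ) (E 1 n))

/-- The scalar `L²` pairing, at the level of Fourier coefficients. -/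
def pairS (c e : Seq d) : ℂ := ∑' n : Zd d, c n * (starRingEnd ℂ) (e n)

/-- A matrix of operators is real-to-real: it preserves the subspace `𝒰 = {(u, ū)}`. -/
def PreservesReality (M : (Fin 2 → Seq d) → (Fin 2 → Seq d)) : Prop :=
  ∀ c : Seq d, M ![c, starSeq c] 1 = starSeq (M ![c, starSeq c] 0)

/-- The coefficient vector of `(v(t), conj v(t))`. -/
def Vvec (v : ℝ → Fn d) (t : ℝ) : Fin 2 → Seq d :=
  ![fCoeff (v t), starSeq (fCoeff (v t))]

/-- `V = (v, v̄)` solves `V̇ = iE Op^BW(|ξ|²𝟙 + A₂ + A₁)V` on `[0,T)`. -/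
def SolvesLin (χ : ℝ → ℝ) (ε : ℝ) (F : (Fin (d + 1) → ℂ) → ℂ) (T : ℝ)
    (u v : ℝ → Fn d) : Prop :=
  ∀ᵐ t ∂(volume.restrict (Set.Ico (0 : ℝ) T)), ∀ (σ : Fin 2) (n : Zd d),
    HasDerivAt (fun τ => Vvec v τ σ n)
      (Complex.I * Em σ * opBWmat χ ε (sysSym F (u t)) (Vvec v t) σ n) t

/-- The regularity hypothesis (4.1):
`u ∈ L^∞([0,T);H^s) ∩ Lip([0,T);H^{s-2})`, with
`sup_t ‖u(t)‖_{H^{2s₀+7}} ≤ r` and `‖∂_t u‖_{H^{2s₀+5}} ≤ r` (as a Lipschitz bound). -/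
def RegHyp (s₀ : ℕ) (s T r : ℝ) (u : ℝ → Fn d) : Prop :=
  (∀ t ∈ Set.Ico (0 : ℝ) T, InHs s (u t)) ∧
  (∃ M : ℝ, ∀ t ∈ Set.Ico (0 : ℝ) T, sobNorm s (u t) ≤ M) ∧
  (∃ L : ℝ, ∀ t₁ ∈ Set.Ico (0 : ℝ) T, ∀ t₂ ∈ Set.Ico (0 : ℝ) T,
    sobNorm (s - 2) (u t₁ - u t₂) ≤ L * |t₁ - t₂|) ∧
  (∀ t ∈ Set.Ico (0 : ℝ) T, sobNorm (2 * (s₀ : ℝ) + 7) (u t) ≤ r) ∧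
  (∀ t₁ ∈ Set.Ico (0 : ℝ) T, ∀ t₂ ∈ Set.Ico (0 : ℝ) T,
    sobNorm (2 * (s₀ : ℝ) + 5) (u t₁ - u t₂) ≤ r * |t₁ - t₂|)

/-- `v ∈ L^∞([0,T);H^s) ∩ Lip([0,T);H^{s-2})`. -/
def RegSol (s T : ℝ) (v : ℝ → Fn d) : Prop :=
  (∀ t ∈ Set.Ico (0 : ℝ) T, InHs s (v t)) ∧
  (∃ M : ℝ, ∀ t ∈ Set.Ico (0 : ℝ) T, sobNorm s (v t) ≤ M) ∧
  (∃ L : ℝ, ∀ t₁ ∈ Set.Ico (0 : ℝ) T, ∀ t₂ ∈ Set.Ico (0 : ℝ) T,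
    sobNorm (s - 2) (v t₁ - v t₂) ≤ L * |t₁ - t₂|)

/-- The high-frequency cut-off `𝒳_R(ξ) = 1 - χ(|ξ|/R)`. -/
def cutXR (χ : ℝ → ℝ) (R : ℝ) (ξ : Vec d) : ℝ := 1 - χ (rnorm ξ / R)

/-- `ã_{2,R}(x,ξ) = |ξ|^{-2} a₂(x,ξ) 𝒳_R(ξ)`. -/
def a2til (F : (Fin (d + 1) → ℂ) → ℂ) (u : Fn d) (χ : ℝ → ℝ) (R : ℝ) : Sym d := fun x ξ =>
  ((((rnorm ξ) ^ 2)⁻¹ * cutXR χ R ξ : ℝ) : ℂ) * a2sym F u x ξ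

/-- `b̃_{2,R}(x,ξ) = |ξ|^{-2} b₂(x,ξ) 𝒳_R(ξ)`. -/
def b2til (F : (Fin (d + 1) → ℂ) → ℂ) (u : Fn d) (χ : ℝ → ℝ) (R : ℝ) : Sym d := fun x ξ =>
  ((((rnorm ξ) ^ 2)⁻¹ * cutXR χ R ξ : ℝ) : ℂ) * b2sym F u x ξ

/-- `λ₂ = ((1+ã_{2,R})² - |b̃_{2,R}|²)^{1/2}`. -/
def lam2 (F : (Fin (d + 1) → ℂ) → ℂ) (u : Fn d) (χ : ℝ → ℝ) (R : ℝ) :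
    Vec d → Vec d → ℝ := fun x ξ =>
  Real.sqrt ((1 + (a2til F u χ R x ξ).re) ^ 2 - ‖b2til F u χ R x ξ‖ ^ 2)

/-- The normalizing denominator `(2λ₂(1+ã_{2,R}+λ₂))^{1/2}`. -/
def sden (F : (Fin (d + 1) → ℂ) → ℂ) (u : Fn d) (χ : ℝ → ℝ) (R : ℝ) :
    Vec d → Vec d → ℝ := fun x ξ =>
  Real.sqrt (2 * lam2 F u χ R x ξ * (1 + (a2til F u χ R x ξ).re + lam2 F u χ R x ξ))

/-- The symbol `s₁`. -/
def s1sym (F : (Fin (d + 1) → ℂ) → ℂ) (u : Fn d) (χ : ℝ → ℝ) (R : ℝ) : Sym d := fun x ξ =>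
  (((1 + (a2til F u χ R x ξ).re + lam2 F u χ R x ξ) / sden F u χ R x ξ : ℝ) : ℂ)

/-- The symbol `s₂`. -/
def s2sym (F : (Fin (d + 1) → ℂ) → ℂ) (u : Fn d) (χ : ℝ → ℝ) (R : ℝ) : Sym d := fun x ξ =>
  -b2til F u χ R x ξ / ((sden F u χ R x ξ : ℝ) : ℂ)

/-- `ã⁺_{2,R} = λ₂ - 1`. -/
def a2plus (F : (Fin (d + 1) → ℂ) → ℂ) (u : Fn d) (χ : ℝ → ℝ) (R : ℝ) : Sym d := fun x ξ =>
  ((lam2 F u χ R x ξ - 1 : ℝ) : ℂ)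

/-- The diagonalized second-order symbol `a₂^{(1)}(x,ξ) = |ξ|² ã⁺_{2,R}(x,ξ)`. -/
def a2one (F : (Fin (d + 1) → ℂ) → ℂ) (u : Fn d) (χ : ℝ → ℝ) (R : ℝ) : Sym d := fun x ξ =>
  (((rnorm ξ) ^ 2 * (lam2 F u χ R x ξ - 1) : ℝ) : ℂ)

/-- The real scalar symbol `ℒ(x,ξ) = |ξ|² + a₂^{(1)}(x,ξ)`. -/
def Lscal (F : (Fin (d + 1) → ℂ) → ℂ) (u : Fn d) (χ : ℝ → ℝ) (R : ℝ) :
    Vec d → Vec d → ℝ := fun x ξ =>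
  (rnorm ξ) ^ 2 + (rnorm ξ) ^ 2 * (lam2 F u χ R x ξ - 1)

/-- The matrix `S(x,ξ)`. -/
def Smat (F : (Fin (d + 1) → ℂ) → ℂ) (u : Fn d) (χ : ℝ → ℝ) (R : ℝ) (x ξ : Vec d) :
    Matrix (Fin 2) (Fin 2) ℂ :=
  !![s1sym F u χ R x ξ, s2sym F u χ R x ξ;
     (starRingEnd ℂ) (s2sym F u χ R x ξ), s1sym F u χ R x ξ]

/-- The matrix `S^{-1}(x,ξ)`. -/
def SmatInv (F : (Fin (d + 1) → ℂ) → ℂ) (u : Fn d) (χ : ℝ → ℝ) (R : ℝ) (x ξ : Vec d) :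
    Matrix (Fin 2) (Fin 2) ℂ :=
  !![s1sym F u χ R x ξ, -s2sym F u χ R x ξ;
     -(starRingEnd ℂ) (s2sym F u χ R x ξ), s1sym F u χ R x ξ]

/-- The matrix `Ã_{2,R}(x,ξ)`. -/
def A2tilMat (F : (Fin (d + 1) → ℂ) → ℂ) (u : Fn d) (χ : ℝ → ℝ) (R : ℝ) (x ξ : Vec d) :
    Matrix (Fin 2) (Fin 2) ℂ :=
  !![a2til F u χ R x ξ, b2til F u χ R x ξ;
     (starRingEnd ℂ) (b2til F u χ R x (-ξ)), a2til F u χ R x ξ]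

/-- The matrix `E = diag(1,-1)`. -/
def EmatM : Matrix (Fin 2) (Fin 2) ℂ := !![1, 0; 0, -1]

/-- The matrix of symbols `S^{-1}(x,ξ)`. -/
def SinvMatSym (F : (Fin (d + 1) → ℂ) → ℂ) (u : Fn d) (χ : ℝ → ℝ) (R : ℝ) :
    Fin 2 → Fin 2 → Sym d :=
  ![![s1sym F u χ R, fun x ξ => -s2sym F u χ R x ξ],
    ![fun x ξ => -(starRingEnd ℂ) (s2sym F u χ R x ξ), s1sym F u χ R]]

/-- The entry `s₁^{(1)}` of the matrix `S₁`. -/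
def s1_1 (F : (Fin (d + 1) → ℂ) → ℂ) (u : Fn d) (χ : ℝ → ℝ) (R : ℝ) : Sym d := fun x ξ =>
  1 / (2 * Complex.I) *
    (poisson (s2sym F u χ R) (starSym (s2sym F u χ R)) x ξ * s1sym F u χ R x ξ
      + 2 * poisson (s1sym F u χ R) (s2sym F u χ R) x ξ *
          (starRingEnd ℂ) (s2sym F u χ R x ξ))

/-- The entry `s₂^{(1)}` of the matrix `S₁`. -/
def s2_1 (F : (Fin (d + 1) → ℂ) → ℂ) (u : Fn d) (χ : ℝ → ℝ) (R : ℝ) : Sym d := fun x ξ =>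
  1 / (2 * Complex.I) *
    (poisson (s2sym F u χ R) (starSym (s2sym F u χ R)) x ξ * s2sym F u χ R x ξ
      + 2 * poisson (s1sym F u χ R) (s2sym F u χ R) x ξ * s1sym F u χ R x ξ)

/-- The matrix `S₁(x,ξ)`. -/
def S1mat (F : (Fin (d + 1) → ℂ) → ℂ) (u : Fn d) (χ : ℝ → ℝ) (R : ℝ) (x ξ : Vec d) :
    Matrix (Fin 2) (Fin 2) ℂ :=
  (1 / (2 * Complex.I)) •
    (!![poisson (s2sym F u χ R) (starSym (s2sym F u χ R)) x ξ,
          2 * poisson (s1sym F u χ R) (s2sym F u χ R) x ξ;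
        -2 * poisson (s1sym F u χ R) (starSym (s2sym F u χ R)) x (-ξ),
          poisson (s2sym F u χ R) (starSym (s2sym F u χ R)) x (-ξ)] *
      Smat F u χ R x ξ)

/-- The symbol `g₁`. -/
def g1sym (F : (Fin (d + 1) → ℂ) → ℂ) (u : Fn d) (χ : ℝ → ℝ) (R : ℝ) : Sym d := fun x ξ =>
  1 / (2 * Complex.I) * poisson (s1_1 F u χ R) (s1sym F u χ R) x ξ
    - 1 / (2 * Complex.I) * poisson (s2_1 F u χ R) (starSym (s2sym F u χ R)) x ξ
    + 1 / 8 * sigmaB (s2sym F u χ R) (starSym (s2sym F u χ R)) x ξ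

/-- The symbol `g₂`. -/
def g2sym (F : (Fin (d + 1) → ℂ) → ℂ) (u : Fn d) (χ : ℝ → ℝ) (R : ℝ) : Sym d := fun x ξ =>
  -(1 / (2 * Complex.I)) * poisson (s1_1 F u χ R) (s2sym F u χ R) x ξ
    + 1 / (2 * Complex.I) * poisson (s2_1 F u χ R) (s1sym F u χ R) x ξ

/-- The derivative operator `∂_{x_i}` at the level of Fourier coefficients. -/
def dOp (i : Fin d) (c : Seq d) : Seq d := fun n => Complex.I * ((n i : ℝ) : ℂ) * c n

/-- A positive constant depending monotonically on a size parameter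
(hence bounded from above as the parameter goes to zero). -/
def GoodConst (C : ℝ → ℝ) : Prop := Monotone C ∧ ∀ x : ℝ, 0 < C x



/-- The normalizing constant. -/
def kap (d : ℕ) : ℂ := (((2 * π : ℝ) ^ (-(d : ℝ) / 2) : ℝ) : ℂ)

lemma kap_sq (d : ℕ) : kap d * kap d = (((2 * π) ^ d)⁻¹ : ℝ) := by
  unfold kap
  rw [← Complex.ofReal_mul, ← Real.rpow_add (by positivity), ← Real.rpow_natCast,
    ← Real.rpow_neg (by positivity)]
  congr 2
  ring

lemma kap_pos (d : ℕ) : 0 < ((2 * π : ℝ) ^ (-(d : ℝ) / 2) : ℝ) := by positivity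

lemma kap_ne (d : ℕ) : kap d ≠ 0 := by
  unfold kap
  exact_mod_cast (kap_pos d).ne'

lemma mFourier_coe (n : Zd d) (x : Vec d) :
    UnitAddTorus.mFourier n (fun i => ((x i : ℝ) : UnitAddCircle)) =
      Complex.exp (Complex.I * ((∑ i, (n i : ℝ) * (2 * π * x i) : ℝ) : ℂ)) := by
  simp only [UnitAddTorus.mFourier, ContinuousMap.coe_mk, fourier_coe_apply]
  rw [← Complex.exp_sum]
  congr 1
  push_cast
  rw [Finset.mul_sum]
  refine Finset.sum_congr rfl fun i _ => ?_
  simp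
  ring

lemma exists_lift (u : Fn d) (hc : Continuous u) (hp : Periodic2pi u) :
    ∃ f : C(UnitAddTorus (Fin d), ℂ), ∀ x : Vec d,
      f (fun i => ((x i : ℝ) : UnitAddCircle)) = u ((2 * π) • x) := by
  have hq : IsOpenQuotientMap (Pi.map (fun (_ : Fin d) (t : ℝ) => (t : UnitAddCircle))) := by
    apply IsOpenQuotientMap.piMap
    intro i
    exact QuotientAddGroup.isOpenQuotientMap_mk
  let g : C(Vec d, ℂ) := ⟨fun x => u ((2 * π) • x), hc.comp (continuous_const_smul (2 * π))⟩
  let P : C(Vec d, UnitAddTorus (Fin d)) := ⟨_, hq.continuous⟩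
  have hP : Topology.IsQuotientMap P := hq.isQuotientMap
  have hfac : Function.FactorsThrough g P := by
    intro x y hxy
    have h1 : ∀ i, ∃ n : ℤ, x i = y i + n := by
      intro i
      have := congrFun hxy i
      simp only [P, ContinuousMap.coe_mk, Pi.map_apply] at this
      obtain ⟨m, hm⟩ := (QuotientAddGroup.eq_iff_sub_mem.1 this)
      refine ⟨m, ?_⟩
      simp only [zsmul_eq_mul, mul_one] at hm
      linarith
    choose n hn using h1
    have : ((2 * π) • x : Vec d) = fun i => ((2 * π) • y) i + 2 * π * (n i : ℝ) := by
      ext i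
      simp [hn i]
      ring
    change u _ = u _
    rw [this, hp]
  refine ⟨hP.lift g hfac, fun x => ?_⟩
  exact congrArg (fun h : C(Vec d, ℂ) => h x) (hP.lift_comp g hfac)

open scoped Pointwise in
lemma mFourierCoeff_lift (u : Fn d) (f : C(UnitAddTorus (Fin d), ℂ))
    (hf : ∀ x : Vec d, f (fun i => ((x i : ℝ) : UnitAddCircle)) = u ((2 * π) • x)) (n : Zd d) :
    UnitAddTorus.mFourierCoeff f n = kap d * fCoeff u n := by
  rw [UnitAddTorus.mFourierCoeff_eq_integral f n 0]
  simp only [hf, mFourier_coe]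
  have h := Measure.setIntegral_comp_smul_of_pos (μ := (volume : Measure (Vec d)))
    (fun x : Vec d => u x * Complex.exp (-Complex.I * ((∑ i, (n i : ℝ) * x i : ℝ) : ℂ)))
    {x : Vec d | ∀ i, x i ∈ Set.Ioc ((0 : Vec d) i) ((0 : Vec d) i + 1)} (R := 2 * π)
    (by positivity)
  have hs : (2 * π) • {x : Vec d | ∀ i, x i ∈ Set.Ioc ((0 : Vec d) i) ((0 : Vec d) i + 1)}
      = box d := by
    ext x
    have hpi : (2 * π) ≠ 0 := by positivity
    rw [Set.mem_smul_set_iff_inv_smul_mem₀ hpi]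
    simp only [box, Set.mem_pi, Set.mem_setOf_eq, Set.mem_univ, true_imp_iff, Set.mem_Ioc,
      Pi.zero_apply, zero_add, Pi.smul_apply, smul_eq_mul]
    refine forall_congr' fun i => and_congr ?_ ?_
    · rw [mul_pos_iff_of_pos_left (by positivity)]
    · rw [inv_mul_le_iff₀ (by positivity), mul_one]
  rw [hs] at h
  unfold fCoeff
  rw [← mul_assoc]
  change _ = (kap d * kap d) * _
  rw [kap_sq]
  simp only [Module.finrank_fintype_fun_eq_card, Fintype.card_fin] at h
  rw [← Complex.real_smul, ← h]
  congr 1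
  ext x
  simp only [smul_eq_mul, mul_comm (u _)]
  congr 2
  push_cast
  simp

lemma fourier_inv (u : Fn d) (hc : Continuous u) (hp : Periodic2pi u)
    (hs : Summable (fCoeff u)) (x : Vec d) :
    HasSum (fun n : Zd d => kap d * fCoeff u n *
        Complex.exp (Complex.I * ((∑ i, (n i : ℝ) * x i : ℝ) : ℂ))) (u x) := by
  obtain ⟨f, hf⟩ := exists_lift u hc hp
  have hco := mFourierCoeff_lift u f hf
  have h1 : Summable (UnitAddTorus.mFourierCoeff f) := by
    have : UnitAddTorus.mFourierCoeff f = fun n => kap d * fCoeff u n := funext hco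
    rw [this]
    exact hs.mul_left _
  have h2 := UnitAddTorus.hasSum_mFourier_series_apply_of_summable h1
    (fun i => (((2 * π)⁻¹ * x i : ℝ) : UnitAddCircle))
  have hpi : (2 * π) ≠ 0 := by positivity
  have h3 : ((2 * π) • (fun i => (2 * π)⁻¹ * x i) : Vec d) = x := by
    ext i
    simp only [Pi.smul_apply, smul_eq_mul]
    field_simp
  rw [hf (fun i => (2 * π)⁻¹ * x i), h3] at h2
  simp only [hco, mFourier_coe (x := fun i => (2 * π)⁻¹ * x i), smul_eq_mul] at h2
  convert h2 using 5
  congr 1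
  refine Finset.sum_congr rfl fun i _ => ?_
  field_simp


lemma box_measurable : MeasurableSet (box d) :=
  MeasurableSet.univ_pi fun _ => measurableSet_Ioc

lemma box_subset : box d ⊆ Set.Icc (0 : Vec d) (fun _ => 2 * π) := by
  intro x hx
  simp only [box, Set.mem_pi, Set.mem_univ, true_imp_iff, Set.mem_Ioc] at hx
  exact ⟨fun i => (hx i).1.le, fun i => (hx i).2⟩

lemma box_ae : (box d : Set (Vec d)) =ᵐ[volume] Set.Icc (0 : Vec d) (fun _ => 2 * π) := by
  rw [volume_pi]
  exact Measure.univ_pi_Ioc_ae_eq_Icc (f := (0 : Vec d)) (g := fun _ => 2 * π)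

lemma box_volume_lt : volume (box d) < ⊤ :=
  (measure_mono box_subset).trans_lt isCompact_Icc.measure_lt_top

instance : IsFiniteMeasure (volume.restrict (box d)) :=
  ⟨by simpa using box_volume_lt⟩

lemma integrableOn_box (u : Fn d) (hc : Continuous u) : IntegrableOn u (box d) :=
  (hc.continuousOn.integrableOn_compact isCompact_Icc).mono_set box_subset

/-- The exponential `e^{-i n·x}`. -/
def eneg (n : Zd d) (x : Vec d) : ℂ :=
  Complex.exp (-Complex.I * ((∑ i, (n i : ℝ) * x i : ℝ) : ℂ))

lemma eneg_cont (n : Zd d) : Continuous (eneg n) := by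
  unfold eneg
  fun_prop

lemma eneg_norm (n : Zd d) (x : Vec d) : ‖eneg n x‖ = 1 := by
  unfold eneg
  rw [Complex.norm_exp]
  simp

lemma fCoeff_eq (u : Fn d) (n : Zd d) :
    fCoeff u n = kap d * ∫ x in box d, u x * eneg n x := rfl

/-- Constant for the sup bound of Fourier coefficients. -/
def KK (d : ℕ) : ℝ := ‖kap d‖ * (volume : Measure (Vec d)).real (box d)

lemma KK_nonneg : 0 ≤ KK d := by unfold KK; positivity

lemma fCoeff_norm_le (u : Fn d) (B : ℝ) (hB : ∀ x, ‖u x‖ ≤ B) (n : Zd d) :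
    ‖fCoeff u n‖ ≤ KK d * B := by
  rw [fCoeff_eq, norm_mul, KK, mul_assoc]
  refine mul_le_mul_of_nonneg_left ?_ (norm_nonneg _)
  rw [mul_comm]
  refine norm_setIntegral_le_of_norm_le_const box_volume_lt ?_
  intro x _
  rw [norm_mul, eneg_norm, mul_one]
  exact hB x

lemma fCoeff_conv (u v : Fn d) (hu : Continuous u) (hv : Continuous v) (hp : Periodic2pi v)
    (hs : Summable (fCoeff v)) (n : Zd d) :
    HasSum (fun k : Zd d => kap d * (fCoeff u (n - k) * fCoeff v k))
      (fCoeff (fun x => u x * v x) n) := by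
  let F : Zd d → Vec d → ℂ := fun k x => kap d * fCoeff v k * (u x * eneg (n - k) x)
  have hFc : ∀ k, Continuous (F k) := fun k =>
    continuous_const.mul (hu.mul (eneg_cont _))
  have h1 := hasSum_integral_of_summable_integral_norm (μ := volume.restrict (box d)) (F := F)
    (fun k => integrableOn_box _ (hFc k)) (by
      have : ∀ k, ∫ x in box d, ‖F k x‖ = ‖kap d * fCoeff v k‖ * ∫ x in box d, ‖u x‖ := by
        intro k
        rw [← integral_const_mul]
        refine integral_congr_ae (Filter.Eventually.of_forall fun x => ?_)
        simp only [F]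
        rw [norm_mul, norm_mul (u x), eneg_norm, mul_one]
      simp only [this]
      exact ((hs.mul_left (kap d)).norm).mul_right _)
  have h2 : ∀ x, ∑' k, F k x = u x * v x * eneg n x := by
    intro x
    have h3 := (fourier_inv v hv hp hs x).mul_left (u x * eneg n x)
    have h4 : HasSum (fun k => F k x) (u x * eneg n x * v x) := by
      refine HasSum.congr_fun h3 (fun k => ?_)
      simp only [F]
      have : eneg (n - k) x = eneg n x *
          Complex.exp (Complex.I * ((∑ i, (k i : ℝ) * x i : ℝ) : ℂ)) := by
        unfold eneg
        rw [← Complex.exp_add]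
        congr 1
        push_cast
        simp only [Finset.mul_sum, ← Finset.sum_add_distrib]
        refine Finset.sum_congr rfl fun i _ => ?_
        push_cast [Pi.sub_apply]
        ring
      rw [this]
      ring
    rw [h4.tsum_eq]
    ring
  simp only [h2] at h1
  have h5 := h1.mul_left (kap d)
  rw [← fCoeff_eq (fun x => u x * v x)] at h5
  refine HasSum.congr_fun h5 (fun k => ?_)
  rw [fCoeff_eq u, integral_const_mul]
  ring

lemma fCoeff_conv' (u v : Fn d) (hu : Continuous u) (hv : Continuous v) (hp : Periodic2pi v)
    (hs : Summable (fCoeff v)) (j l : Zd d) :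
    HasSum (fun k : Zd d => kap d * (fCoeff u (j - k) * fCoeff v (k - l)))
      (fCoeff (fun x => u x * v x) (j - l)) := by
  have h := fCoeff_conv u v hu hv hp hs (j - l)
  rw [← (Equiv.subRight l).hasSum_iff] at h
  refine HasSum.congr_fun h (fun k => ?_)
  simp [Function.comp]

lemma integral_pdF (i : Fin d) (w : Fn d) (hw : ContDiff ℝ 1 w) (hp : Periodic2pi w) :
    ∫ x in box d, pdF i w x = 0 := by
  rcases d with _ | n
  · exact i.elim0
  rw [setIntegral_congr_set box_ae]
  have hfc : Continuous (fderiv ℝ w) := hw.continuous_fderiv (by norm_num)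
  have hdiff : Differentiable ℝ w := hw.differentiable (by norm_num)
  have hsum : ∀ x : Vec (n + 1), ∑ k : Fin (n + 1),
      (if k = i then fderiv ℝ w x else 0) (Pi.single k 1) = pdF i w x := by
    intro x
    rw [Finset.sum_eq_single i]
    · simp [pdF]
    · intro k _ hk
      simp [hk]
    · simp
  have h := integral_divergence_of_hasFDerivAt_off_countable' (E := ℂ) (0 : Vec (n + 1))
    (fun _ => 2 * π) (fun _ => by positivity)
    (fun k x => if k = i then w x else 0)
    (fun k x => if k = i then fderiv ℝ w x else 0) ∅ Set.countable_empty
    (fun k => by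
      by_cases hk : k = i
      · simpa [hk] using hw.continuous.continuousOn
      · simp [hk, continuousOn_const])
    (fun x _ k => by
      by_cases hk : k = i
      · simpa [hk] using (hdiff x).hasFDerivAt
      · simpa [hk] using hasFDerivAt_const (0 : ℂ) x)
    (by
      simp only [hsum]
      have : Continuous (pdF i w) := by
        unfold pdF
        exact hfc.clm_apply continuous_const
      exact this.continuousOn.integrableOn_compact isCompact_Icc)
  simp only [hsum] at h
  rw [h]
  refine Finset.sum_eq_zero fun k _ => ?_
  by_cases hk : k = i
  · subst hk
    simp only [if_true]
    rw [sub_eq_zero]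
    refine integral_congr_ae (Filter.Eventually.of_forall fun x => ?_)
    simp only [Pi.zero_apply]
    rw [← hp (k.insertNth 0 x) (Pi.single k 1)]
    congr 1
    ext m
    refine Fin.succAboveCases k ?_ (fun m => ?_) m
    · simp
    · simp
  · simp [hk]

lemma hasFDerivAt_eneg (n : Zd d) (i : Fin d) (x : Vec d) :
    ∃ e' : Vec d →L[ℝ] ℂ, HasFDerivAt (eneg n) e' x ∧
      e' (Pi.single i 1) = -Complex.I * (n i : ℂ) * eneg n x := by
  have hd : Differentiable ℝ (eneg n) := by
    unfold eneg
    fun_prop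
  refine ⟨fderiv ℝ (eneg n) x, (hd x).hasFDerivAt, ?_⟩
  have h1 : HasDerivAt (fun t : ℝ => eneg n (x + t • (Pi.single i (1 : ℝ) : Vec d)))
      (fderiv ℝ (eneg n) x (Pi.single i 1)) 0 := by
    have := (hd x).hasFDerivAt.hasLineDerivAt (Pi.single i (1 : ℝ) : Vec d)
    exact this
  have h2 : HasDerivAt (fun t : ℝ => eneg n (x + t • (Pi.single i (1 : ℝ) : Vec d)))
      (-Complex.I * (n i : ℂ) * eneg n x) 0 := by
    have h3 : ∀ t : ℝ, eneg n (x + t • (Pi.single i (1 : ℝ) : Vec d)) =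
        eneg n x * Complex.exp (-Complex.I * (n i : ℂ) * (t : ℂ)) := by
      intro t
      unfold eneg
      rw [← Complex.exp_add]
      congr 1
      have : ∑ m, (n m : ℝ) * (x + t • (Pi.single i (1 : ℝ) : Vec d)) m =
          (∑ m, (n m : ℝ) * x m) + n i * t := by
        simp only [Pi.add_apply, Pi.smul_apply, smul_eq_mul, mul_add, Finset.sum_add_distrib]
        congr 1
        rw [Finset.sum_eq_single i]
        · simp
        · intro b _ hb
          simp [hb]
        · simp
      rw [this]
      push_cast
      ring
    rw [show (fun t : ℝ => eneg n (x + t • (Pi.single i (1 : ℝ) : Vec d))) = _ from funext h3]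
    have h4 : HasDerivAt (fun t : ℝ => -Complex.I * (n i : ℂ) * (t : ℂ))
        (-Complex.I * (n i : ℂ)) 0 := by
      simpa using (Complex.ofRealCLM.hasDerivAt (x := (0 : ℝ))).const_mul
        (-Complex.I * (n i : ℂ))
    have h5 := (h4.cexp).const_mul (eneg n x)
    refine h5.congr_deriv ?_
    simp
    ring
  exact h1.unique h2

lemma eneg_periodic (n : Zd d) : Periodic2pi (eneg n) := by
  intro x m
  unfold eneg
  rw [Complex.exp_eq_exp_iff_exists_int]
  refine ⟨-∑ i, n i * m i, ?_⟩
  push_cast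
  simp only [mul_add, Finset.sum_add_distrib, Finset.sum_mul, Finset.mul_sum, neg_mul]
  congr 1
  rw [← Finset.sum_neg_distrib]
  refine Finset.sum_congr rfl fun i _ => ?_
  ring

lemma eneg_contDiff (n : Zd d) : ContDiff ℝ 1 (eneg n) := by
  unfold eneg
  have : ContDiff ℝ 1 (fun x : Vec d => (∑ i, (n i : ℝ) * x i : ℝ)) := by fun_prop
  exact ((contDiff_const.mul (Complex.ofRealCLM.contDiff.comp this))).cexp

lemma fCoeff_pdF (i : Fin d) (u : Fn d) (hu : ContDiff ℝ 1 u) (hp : Periodic2pi u) (n : Zd d) :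
    fCoeff (pdF i u) n = Complex.I * (n i : ℂ) * fCoeff u n := by
  have h := integral_pdF i (fun x => u x * eneg n x) (hu.mul (eneg_contDiff n)) (by
    intro x m
    have h1 := hp x m
    have h2 := eneg_periodic n x m
    simp only [h1, h2])
  have hpd : ∀ x, pdF i (fun x => u x * eneg n x) x =
      pdF i u x * eneg n x - Complex.I * (n i : ℂ) * (u x * eneg n x) := by
    intro x
    obtain ⟨e', he, he'⟩ := hasFDerivAt_eneg n i x
    have hux := (hu.differentiable (by norm_num) x).hasFDerivAt
    unfold pdF
    rw [(hux.fun_mul he).fderiv]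
    simp [he']
    ring
  simp only [hpd] at h
  have hc : Continuous (pdF i u) := by
    unfold pdF
    exact (hu.continuous_fderiv (by norm_num)).clm_apply continuous_const
  rw [integral_sub, sub_eq_zero, integral_const_mul] at h
  · rw [fCoeff_eq, fCoeff_eq, h]
    ring
  · exact integrableOn_box _ (hc.mul (eneg_cont n))
  · exact integrableOn_box _ (continuous_const.mul (hu.continuous.mul (eneg_cont n)))


lemma pdx_eq (a : Sym d) (ha : Differentiable ℝ (Function.uncurry a)) (j : Fin d) (x ξ : Vec d) :
    pdx j a x ξ = fderiv ℝ (Function.uncurry a) (x, ξ) (Pi.single j 1, 0) := by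
  have h1 := (ha (x, ξ)).hasFDerivAt
  have h2 : HasFDerivAt (fun y : Vec d => (y, ξ)) (ContinuousLinearMap.inl ℝ (Vec d) (Vec d)) x :=
    hasFDerivAt_prodMk_left x ξ
  have h3 : HasFDerivAt (fun y => a y ξ) ((fderiv ℝ (Function.uncurry a) (x, ξ)).comp
      (ContinuousLinearMap.inl ℝ (Vec d) (Vec d))) x :=
    HasFDerivAt.comp (g := Function.uncurry a) x h1 h2
  unfold pdx
  rw [h3.fderiv]
  simp

lemma pdxi_hasFDerivAt (a : Sym d) (ha : Differentiable ℝ (Function.uncurry a)) (x ξ : Vec d) :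
    HasFDerivAt (fun η => a x η) ((fderiv ℝ (Function.uncurry a) (x, ξ)).comp
      (ContinuousLinearMap.inr ℝ (Vec d) (Vec d))) ξ := by
  have h1 := (ha (x, ξ)).hasFDerivAt
  have h2 : HasFDerivAt (fun y : Vec d => (x, y)) (ContinuousLinearMap.inr ℝ (Vec d) (Vec d)) ξ :=
    hasFDerivAt_prodMk_right x ξ
  exact h1.comp ξ h2

lemma pdxi_eq (a : Sym d) (ha : Differentiable ℝ (Function.uncurry a)) (j : Fin d) (x ξ : Vec d) :
    pdxi j a x ξ = fderiv ℝ (Function.uncurry a) (x, ξ) (0, Pi.single j 1) := by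
  unfold pdxi
  rw [(pdxi_hasFDerivAt a ha x ξ).fderiv]
  simp

lemma pdx_contDiff (a : Sym d) (n : ℕ) (ha : ContDiff ℝ (n + 1 : ℕ) (Function.uncurry a))
    (j : Fin d) : ContDiff ℝ n (Function.uncurry (pdx j a)) := by
  have hd : Differentiable ℝ (Function.uncurry a) := ha.differentiable (by simp)
  have : Function.uncurry (pdx j a) =
      fun z => fderiv ℝ (Function.uncurry a) z (Pi.single j 1, 0) := by
    ext ⟨x, ξ⟩
    exact pdx_eq a hd j x ξ
  rw [this]
  exact (ha.fderiv_right (m := n) (by norm_cast)).clm_apply contDiff_const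

lemma pdxi_contDiff (a : Sym d) (n : ℕ) (ha : ContDiff ℝ (n + 1 : ℕ) (Function.uncurry a))
    (j : Fin d) : ContDiff ℝ n (Function.uncurry (pdxi j a)) := by
  have hd : Differentiable ℝ (Function.uncurry a) := ha.differentiable (by simp)
  have : Function.uncurry (pdxi j a) =
      fun z => fderiv ℝ (Function.uncurry a) z (0, Pi.single j 1) := by
    ext ⟨x, ξ⟩
    exact pdxi_eq a hd j x ξ
  rw [this]
  exact (ha.fderiv_right (m := n) (by norm_cast)).clm_apply contDiff_const

/-- Periodicity in `x` of a symbol. -/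
def SPer (a : Sym d) : Prop := ∀ ξ, Periodic2pi fun x => a x ξ

lemma pdx_per (a : Sym d) (ha : SPer a) (j : Fin d) : SPer (pdx j a) := by
  intro ξ x n
  change fderiv ℝ (fun y => a y ξ) _ _ = fderiv ℝ (fun y => a y ξ) x _
  have h : (fun y => a y ξ) = fun y => a (y + fun i => 2 * π * (n i : ℝ)) ξ := by
    ext y
    exact (ha ξ y n).symm
  have h2 := fderiv_comp_add_right (𝕜 := ℝ) (f := fun y => a y ξ) (x := x)
    (fun i => 2 * π * (n i : ℝ))
  rw [← h] at h2
  rw [h2]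
  rfl

lemma pdxi_per (a : Sym d) (ha : SPer a) (j : Fin d) : SPer (pdxi j a) := by
  intro ξ x n
  change fderiv ℝ (fun η => a _ η) ξ _ = fderiv ℝ (fun η => a x η) ξ _
  congr 2
  ext η
  exact ha η x n

lemma mderiv_cons_inl (j : Fin d) (L : List (Fin d ⊕ Fin d)) (a : Sym d) :
    mderiv (Sum.inl j :: L) a = pdx j (mderiv L a) := rfl

lemma mderiv_cons_inr (j : Fin d) (L : List (Fin d ⊕ Fin d)) (a : Sym d) :
    mderiv (Sum.inr j :: L) a = pdxi j (mderiv L a) := rfl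

lemma mderiv_contDiff (a : Sym d) (N : ℕ) (ha : ContDiff ℝ N (Function.uncurry a))
    (L : List (Fin d ⊕ Fin d)) : ∀ n : ℕ, L.length + n ≤ N →
    ContDiff ℝ n (Function.uncurry (mderiv L a)) := by
  induction L with
  | nil =>
    intro n hn
    exact ha.of_le (by simp at hn; exact_mod_cast hn)
  | cons i L ih =>
    intro n hn
    have := ih (n + 1) (by simp at hn; omega)
    rcases i with j | j
    · exact pdx_contDiff _ n this j
    · exact pdxi_contDiff _ n this j

lemma mderiv_per (a : Sym d) (ha : SPer a) (L : List (Fin d ⊕ Fin d)) : SPer (mderiv L a) := by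
  induction L with
  | nil => exact ha
  | cons i L ih =>
    rcases i with j | j
    · exact pdx_per _ ih j
    · exact pdxi_per _ ih j

lemma symCoeff_pdx (a : Sym d) (ha : ContDiff ℝ 1 (Function.uncurry a)) (hp : SPer a)
    (j : Fin d) (p : Zd d) (ξ : Vec d) :
    symCoeff (pdx j a) p ξ = Complex.I * (p j : ℂ) * symCoeff a p ξ := by
  have h1 : ContDiff ℝ 1 (fun x => a x ξ) := ha.comp (contDiff_prodMk_left ξ)
  exact fCoeff_pdF j (fun x => a x ξ) h1 (hp ξ) p

lemma symCoeff_hasDerivAt (a : Sym d) (ha : ContDiff ℝ 1 (Function.uncurry a))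
    (p : Zd d) (ξ v : Vec d) (t₀ : ℝ) :
    HasDerivAt (fun t : ℝ => symCoeff a p (ξ + t • v))
      (∑ i, (v i : ℂ) * symCoeff (pdxi i a) p (ξ + t₀ • v)) t₀ := by
  have hd : Differentiable ℝ (Function.uncurry a) := ha.differentiable (by norm_num)
  have hfc : Continuous (fderiv ℝ (Function.uncurry a)) := ha.continuous_fderiv (by norm_num)
  let F' : ℝ → Vec d → ℂ := fun t x =>
    fderiv ℝ (Function.uncurry a) (x, ξ + t • v) (0, v) * eneg p x
  have hF'c : Continuous (Function.uncurry F') := by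
    have h1 : Continuous (fun z : ℝ × Vec d => ((z.2, ξ + z.1 • v) : Vec d × Vec d)) := by
      fun_prop
    have h2 : Continuous (fun z : ℝ × Vec d =>
        fderiv ℝ (Function.uncurry a) (z.2, ξ + z.1 • v) (0, v)) :=
      (hfc.comp h1).clm_apply continuous_const
    exact h2.mul ((eneg_cont p).comp continuous_snd)
  have hFc : ∀ t : ℝ, Continuous (fun x => a x (ξ + t • v) * eneg p x) := by
    intro t
    have h1 : Continuous (fun x : Vec d => ((x, ξ + t • v) : Vec d × Vec d)) := by fun_prop
    exact (ha.continuous.comp h1).mul (eneg_cont p)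
  obtain ⟨B, hB⟩ := ((isCompact_Icc (a := t₀ - 1) (b := t₀ + 1)).prod
    (isCompact_Icc (a := (0 : Vec d)) (b := fun _ => 2 * π))).exists_bound_of_continuousOn
      hF'c.continuousOn
  have h := (hasDerivAt_integral_of_dominated_loc_of_deriv_le (𝕜 := ℝ)
    (μ := volume.restrict (box d)) (F := fun t x => a x (ξ + t • v) * eneg p x) (F' := F')
    (x₀ := t₀) (s := Set.Icc (t₀ - 1) (t₀ + 1)) (bound := fun _ => B)
    (Icc_mem_nhds (by linarith) (by linarith))
    (Filter.Eventually.of_forall fun t => (hFc t).aestronglyMeasurable)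
    (integrableOn_box _ (hFc t₀))
    ((hF'c.comp (by fun_prop : Continuous fun x : Vec d => (t₀, x))).aestronglyMeasurable)
    (by
      filter_upwards [ae_restrict_mem box_measurable] with x hx t ht
      exact hB (t, x) ⟨ht, box_subset hx⟩)
    (integrable_const _)
    (by
      filter_upwards with x t _
      have h1 := pdxi_hasFDerivAt a hd x (ξ + t • v)
      have h2 : HasDerivAt (fun t : ℝ => ξ + t • v) v t := by
        simpa using ((hasDerivAt_id t).smul_const v).const_add ξ
      have h3 := (h1.comp_hasDerivAt t h2).mul_const (eneg p x)
      refine h3.congr_deriv ?_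
      simp [F'])).2
  have h2 := h.const_mul (kap d)
  refine h2.congr_deriv ?_
  have h3 : ∀ x, F' t₀ x = ∑ i, (v i : ℂ) * (pdxi i a x (ξ + t₀ • v) * eneg p x) := by
    intro x
    simp only [F']
    have hv : ((0, v) : Vec d × Vec d) = ∑ i, v i • ((0, Pi.single i 1) : Vec d × Vec d) := by
      apply Prod.ext
      · simp [Prod.fst_sum]
      · simp only [Prod.snd_sum, Prod.smul_snd]
        exact (pi_eq_sum_univ' v)
    rw [hv, map_sum, Finset.sum_mul]
    refine Finset.sum_congr rfl fun i _ => ?_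
    rw [pdxi_eq a hd, map_smul, Complex.real_smul]
    ring
  simp only [h3]
  rw [integral_finsetSum, Finset.mul_sum]
  · refine Finset.sum_congr rfl fun i _ => ?_
    rw [integral_const_mul, symCoeff, fCoeff_eq]
    ring
  · intro i _
    have hc : Continuous (fun x => pdxi i a x (ξ + t₀ • v)) := by
      have := (pdxi_contDiff a 0 ha i).continuous
      exact this.comp (by fun_prop : Continuous fun x : Vec d => (x, ξ + t₀ • v))
    exact integrableOn_box _ (continuous_const.mul (hc.mul (eneg_cont p)))

/-- Iterated directional `ξ`-derivative of the Fourier coefficients of a symbol. -/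
def DA (a : Sym d) (p : Zd d) (v : Vec d) : ℕ → List (Fin d ⊕ Fin d) → Vec d → ℂ
  | 0, L, ξ => symCoeff (mderiv L a) p ξ
  | r + 1, L, ξ => ∑ i, (v i : ℂ) * DA a p v r (Sum.inr i :: L) ξ

lemma DA_hasDerivAt (a : Sym d) (N : ℕ) (ha : ContDiff ℝ N (Function.uncurry a))
    (p : Zd d) (ξ v : Vec d) (t : ℝ) (r : ℕ) : ∀ L : List (Fin d ⊕ Fin d), L.length + r + 1 ≤ N →
    HasDerivAt (fun t : ℝ => DA a p v r L (ξ + t • v)) (DA a p v (r + 1) L (ξ + t • v)) t := by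
  induction r with
  | zero =>
    intro L hL
    exact symCoeff_hasDerivAt _ (mderiv_contDiff a N ha L 1 (by omega)) p ξ v t
  | succ r ih =>
    intro L hL
    have h := HasDerivAt.fun_sum (u := Finset.univ) (fun i _ =>
      (ih (Sum.inr i :: L) (by simp; omega)).const_mul (v i : ℂ))
    exact h

lemma DA_bound (a : Sym d) (p : Zd d) (v ξ : Vec d) (N n : ℕ) (B : ℕ → ℝ)
    (hB : ∀ L : List (Fin d ⊕ Fin d), L.length + n ≤ N →
      ‖symCoeff (mderiv L a) p ξ‖ ≤ B (nXi L)) (r : ℕ) :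
    ∀ L : List (Fin d ⊕ Fin d), L.length + r + n ≤ N →
      ‖DA a p v r L ξ‖ ≤ (∑ i, |v i|) ^ r * B (nXi L + r) := by
  induction r with
  | zero =>
    intro L hL
    simpa [DA] using hB L (by omega)
  | succ r ih =>
    intro L hL
    have h1 : ‖DA a p v (r + 1) L ξ‖ ≤ ∑ i, ‖(v i : ℂ) * DA a p v r (Sum.inr i :: L) ξ‖ :=
      norm_sum_le _ _
    refine h1.trans ?_
    rw [pow_succ', mul_assoc, Finset.sum_mul]
    refine Finset.sum_le_sum fun i _ => ?_
    rw [norm_mul, Complex.norm_real, Real.norm_eq_abs]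
    refine mul_le_mul_of_nonneg_left ?_ (abs_nonneg _)
    have := ih (Sum.inr i :: L) (by simp; omega)
    have hn : nXi (Sum.inr i :: L) + r = nXi L + (r + 1) := by
      have : nXi (Sum.inr i :: L) = nXi L + 1 := by
        unfold nXi
        rw [List.filter_cons_of_pos (by rfl), List.length_cons]
      omega
    rwa [hn] at this


lemma jb_one_le (p : Zd d) : 1 ≤ jb p := by
  unfold jb
  rw [Real.one_le_sqrt]
  have : 0 ≤ ∑ i, ((p i : ℝ)) ^ 2 := Finset.sum_nonneg fun i _ => sq_nonneg _
  linarith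

lemma jb_pos (p : Zd d) : 0 < jb p := zero_lt_one.trans_le (jb_one_le p)

lemma jbR_one_le (ξ : Vec d) : 1 ≤ jbR ξ := by
  unfold jbR
  rw [Real.one_le_sqrt]
  have : 0 ≤ ∑ i, (ξ i) ^ 2 := Finset.sum_nonneg fun i _ => sq_nonneg _
  linarith

lemma jbR_pos (ξ : Vec d) : 0 < jbR ξ := zero_lt_one.trans_le (jbR_one_le ξ)

lemma abs_le_jb (p : Zd d) (i : Fin d) : |(p i : ℝ)| ≤ jb p := by
  unfold jb
  apply Real.abs_le_sqrt
  have := Finset.single_le_sum (f := fun i => ((p i : ℝ)) ^ 2) (fun i _ => sq_nonneg _)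
    (Finset.mem_univ i)
  linarith

lemma symNorm_nonneg (m : ℝ) (N : ℕ) (a : Sym d) : 0 ≤ symNorm m N a := by
  apply Real.sSup_nonneg
  rintro r ⟨L, x, ξ, _, rfl⟩
  have := jbR_pos ξ
  positivity

lemma mderiv_le {m : ℝ} {N : ℕ} {a : Sym d} (ha : InSymClass m N a)
    (L : List (Fin d ⊕ Fin d)) (hL : L.length ≤ N) (x ξ : Vec d) :
    ‖mderiv L a x ξ‖ ≤ symNorm m N a * jbR ξ ^ (m - (nXi L : ℝ)) := by
  have h := le_csSup ha.2.2 (⟨L, x, ξ, hL, rfl⟩ :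
    jbR ξ ^ (-m + (nXi L : ℝ)) * ‖mderiv L a x ξ‖ ∈ symVals m N a)
  have hp := jbR_pos ξ
  have h2 : jbR ξ ^ (m - (nXi L : ℝ)) * jbR ξ ^ (-m + (nXi L : ℝ)) = 1 := by
    rw [← Real.rpow_add hp]
    simp
  calc ‖mderiv L a x ξ‖ = jbR ξ ^ (m - (nXi L : ℝ)) *
        (jbR ξ ^ (-m + (nXi L : ℝ)) * ‖mderiv L a x ξ‖) := by rw [← mul_assoc, h2, one_mul]
    _ ≤ jbR ξ ^ (m - (nXi L : ℝ)) * symNorm m N a :=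
        mul_le_mul_of_nonneg_left h (by positivity)
    _ = _ := mul_comm _ _

lemma class_contDiff {m : ℝ} {N : ℕ} {a : Sym d} (ha : InSymClass m N a) :
    ContDiff ℝ N (Function.uncurry a) := by exact_mod_cast ha.1

lemma nXi_replicate (n : ℕ) (i : Fin d) (L : List (Fin d ⊕ Fin d)) :
    nXi (List.replicate n (Sum.inl i) ++ L) = nXi L := by
  induction n with
  | zero => simp
  | succ n ih =>
    rw [List.replicate_succ, List.cons_append]
    unfold nXi at *
    rw [List.filter_cons_of_neg (by simp)]
    exact ih

lemma symCoeff_replicate {m : ℝ} {N : ℕ} {a : Sym d} (ha : InSymClass m N a)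
    (L : List (Fin d ⊕ Fin d)) (n : ℕ) (hL : L.length + n ≤ N) (i : Fin d) (p : Zd d)
    (ξ : Vec d) :
    symCoeff (mderiv (List.replicate n (Sum.inl i) ++ L) a) p ξ =
      (Complex.I * (p i : ℂ)) ^ n * symCoeff (mderiv L a) p ξ := by
  induction n with
  | zero => simp
  | succ n ih =>
    rw [List.replicate_succ, List.cons_append, mderiv_cons_inl, symCoeff_pdx, ih (by omega)]
    · ring
    · exact mderiv_contDiff a N (class_contDiff ha) _ 1 (by simp; omega)
    · exact mderiv_per a ha.2.1 _

lemma exists_max_coord (p : Zd d) (hp : p ≠ 0) : ∃ i, jb p ≤ (1 + d) * |(p i : ℝ)| := by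
  have hne : Nonempty (Fin d) := by
    by_contra h
    rw [not_nonempty_iff] at h
    exact hp (Subsingleton.elim _ _)
  obtain ⟨i, _, hi⟩ := Finset.exists_max_image Finset.univ (fun i => |p i|) Finset.univ_nonempty
  refine ⟨i, ?_⟩
  have hpi : 1 ≤ |p i| := by
    by_contra h
    have h0 : |p i| = 0 := by have := abs_nonneg (p i); omega
    apply hp
    ext k
    have h1 := hi k (Finset.mem_univ k)
    have h2 := abs_nonneg (p k)
    have h3 : |p k| = 0 := by omega
    simpa using h3
  have hpi' : (1 : ℝ) ≤ |(p i : ℝ)| := by exact_mod_cast hpi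
  unfold jb
  apply Real.sqrt_le_iff.2
  refine ⟨by positivity, ?_⟩
  have hs : ∑ k, ((p k : ℝ)) ^ 2 ≤ ∑ _k : Fin d, |(p i : ℝ)| ^ 2 := by
    refine Finset.sum_le_sum fun k _ => ?_
    rw [← sq_abs (p k : ℝ)]
    have h1 : |(p k : ℝ)| ≤ |(p i : ℝ)| := by exact_mod_cast hi k (Finset.mem_univ k)
    gcongr
  simp only [Finset.sum_const, Finset.card_univ, Fintype.card_fin, nsmul_eq_mul] at hs
  have hd : (0 : ℝ) ≤ d := Nat.cast_nonneg d
  nlinarith [mul_nonneg hd (sq_nonneg |(p i : ℝ)|),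
    mul_nonneg (mul_nonneg hd hd) (sq_nonneg |(p i : ℝ)|), sq_nonneg (|(p i : ℝ)| - 1)]

lemma symCoeff_decay {m : ℝ} {N : ℕ} {a : Sym d} (ha : InSymClass m N a)
    (L : List (Fin d ⊕ Fin d)) (n : ℕ) (hL : L.length + n ≤ N) (p : Zd d) (ξ : Vec d) :
    jb p ^ n * ‖symCoeff (mderiv L a) p ξ‖ ≤
      (1 + d) ^ n * KK d * (symNorm m N a * jbR ξ ^ (m - (nXi L : ℝ))) := by
  have hS : 0 ≤ symNorm m N a * jbR ξ ^ (m - (nXi L : ℝ)) :=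
    mul_nonneg (symNorm_nonneg _ _ _) (Real.rpow_nonneg (jbR_pos ξ).le _)
  by_cases hp : p = 0
  · have h1 : jb p = 1 := by simp [jb, hp]
    rw [h1, one_pow, one_mul, mul_assoc]
    have h2 : ‖symCoeff (mderiv L a) p ξ‖ ≤ KK d * (symNorm m N a * jbR ξ ^ (m - (nXi L : ℝ))) :=
      fCoeff_norm_le _ _ (fun x => mderiv_le ha L (by omega) x ξ) p
    refine h2.trans (le_mul_of_one_le_left (mul_nonneg KK_nonneg hS) ?_)
    exact one_le_pow₀ (by simp)
  · obtain ⟨i, hi⟩ := exists_max_coord p hp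
    have h2 : ‖symCoeff (mderiv (List.replicate n (Sum.inl i) ++ L) a) p ξ‖ ≤
        KK d * (symNorm m N a * jbR ξ ^ (m - (nXi L : ℝ))) := by
      have := fun x => mderiv_le ha (List.replicate n (Sum.inl i) ++ L)
        (by simp; omega) x ξ
      simp only [nXi_replicate] at this
      exact fCoeff_norm_le _ _ this p
    rw [symCoeff_replicate ha L n hL, norm_mul, norm_pow, norm_mul, Complex.norm_I, one_mul,
      Complex.norm_intCast] at h2
    calc jb p ^ n * ‖symCoeff (mderiv L a) p ξ‖
        ≤ ((1 + d) * |(p i : ℝ)|) ^ n * ‖symCoeff (mderiv L a) p ξ‖ := by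
          have := jb_pos p
          gcongr
      _ = (1 + d) ^ n * (|(p i : ℝ)| ^ n * ‖symCoeff (mderiv L a) p ξ‖) := by
          rw [mul_pow]; ring
      _ ≤ (1 + d) ^ n * (KK d * (symNorm m N a * jbR ξ ^ (m - (nXi L : ℝ)))) := by gcongr
      _ = _ := by ring

lemma summable_jb (n : ℕ) (hn : d < n) : Summable (fun p : Zd d => ((jb p)⁻¹) ^ n) := by
  let b := Pi.basisFun ℝ (Fin d)
  let Λ : Submodule ℤ (Vec d) := Submodule.span ℤ (Set.range b)
  have hmem : ∀ p : Zd d, (fun i => (p i : ℝ)) ∈ Λ := by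
    intro p
    have : (fun i => (p i : ℝ)) = ∑ i, p i • b i := by
      ext k
      simp [b, Finset.sum_apply, Pi.single_apply]
    rw [this]
    exact Submodule.sum_mem _ fun i _ => Submodule.smul_mem _ _ (Submodule.subset_span ⟨i, rfl⟩)
  have hr : Module.finrank ℤ Λ = d := by
    have := ZLattice.rank ℝ Λ
    simpa using this
  have h1 := ZLattice.summable_norm_rpow Λ (-(n : ℝ)) (by
    rw [hr]
    have : (d : ℝ) < n := by exact_mod_cast hn
    linarith)
  have hinj : Function.Injective (fun p : Zd d => (⟨fun i => (p i : ℝ), hmem p⟩ : Λ)) := by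
    intro p q hpq
    ext i
    have := congrFun (Subtype.ext_iff.1 hpq) i
    simpa using this
  have h2 := h1.comp_injective hinj
  refine Summable.of_norm_bounded_eventually h2 ?_
  have hfin : ({0} : Set (Zd d)).Finite := Set.finite_singleton _
  filter_upwards [hfin.compl_mem_cofinite] with p hp
  have hp0 : p ≠ 0 := by simpa using hp
  have hv0 : (fun i => (p i : ℝ)) ≠ (0 : Vec d) := by
    intro h
    apply hp0
    ext i
    simpa using congrFun h i
  have hn0 : 0 < ‖(fun i => (p i : ℝ) : Vec d)‖ := norm_pos_iff.2 hv0
  have hle : ‖(fun i => (p i : ℝ) : Vec d)‖ ≤ jb p := by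
    rw [pi_norm_le_iff_of_nonneg (jb_pos p).le]
    intro i
    exact abs_le_jb p i
  have hj := jb_pos p
  rw [Real.norm_of_nonneg (by positivity)]
  simp only [Function.comp, Submodule.coe_norm]
  rw [Real.rpow_neg hn0.le, Real.rpow_natCast, inv_pow]
  gcongr

lemma symCoeff_summable {m : ℝ} {N : ℕ} {a : Sym d} (ha : InSymClass m N a)
    (L : List (Fin d ⊕ Fin d)) (hL : L.length + (d + 1) ≤ N) (ξ : Vec d) :
    Summable (fCoeff (fun x => mderiv L a x ξ)) := by
  refine Summable.of_norm_bounded ((summable_jb (d + 1) (Nat.lt_succ_self d)).mul_left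
    ((1 + d) ^ (d + 1) * KK d * (symNorm m N a * jbR ξ ^ (m - (nXi L : ℝ))))) fun p => ?_
  have h := symCoeff_decay ha L (d + 1) hL p ξ
  have hj := jb_pos p
  rw [inv_pow, ← div_eq_mul_inv, le_div_iff₀ (by positivity), mul_comm]
  exact h

lemma DA_final {m : ℝ} {N : ℕ} {a : Sym d} (ha : InSymClass m N a) (p q : Zd d) (ξ v : Vec d)
    (hv : ∀ i, |v i| ≤ jb q) (r : ℕ) (hr : r ≤ N) (hr3 : r ≤ 3) :
    ‖DA a p v r [] ξ‖ ≤ (1 + d) ^ (N + 3) * KK d * symNorm m N a *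
      (jb q ^ r * ((jb p)⁻¹) ^ (N - r) * jbR ξ ^ (m - (r : ℝ))) := by
  have hj := jb_pos p
  have hq := jb_pos q
  have hx := jbR_pos ξ
  have h := DA_bound a p v ξ N (N - r)
    (fun k => (1 + d) ^ (N - r) * KK d * (symNorm m N a * jbR ξ ^ (m - (k : ℝ))) *
      ((jb p)⁻¹) ^ (N - r)) (by
      intro L hL
      have h := symCoeff_decay ha L (N - r) hL p ξ
      rw [inv_pow, ← div_eq_mul_inv, le_div_iff₀ (by positivity), mul_comm]
      exact h) r [] (by simp; omega)
  have h0 : nXi ([] : List (Fin d ⊕ Fin d)) + r = r := by simp [nXi]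
  rw [h0] at h
  refine h.trans ?_
  have hs : ∑ i, |v i| ≤ (1 + d) * jb q := by
    calc ∑ i, |v i| ≤ ∑ _i : Fin d, jb q := Finset.sum_le_sum fun i _ => hv i
      _ = d * jb q := by simp
      _ ≤ _ := by gcongr; linarith
  have hS := symNorm_nonneg m N a
  have hK := KK_nonneg (d := d)
  have hd1 : (1 : ℝ) ≤ 1 + d := by simp
  calc (∑ i, |v i|) ^ r * ((1 + d) ^ (N - r) * KK d * (symNorm m N a * jbR ξ ^ (m - (r : ℝ))) *
      ((jb p)⁻¹) ^ (N - r))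
      ≤ ((1 + d) * jb q) ^ r * ((1 + d) ^ N * KK d *
        (symNorm m N a * jbR ξ ^ (m - (r : ℝ))) * ((jb p)⁻¹) ^ (N - r)) := by
        have : 0 ≤ ∑ i, |v i| := Finset.sum_nonneg fun i _ => abs_nonneg _
        gcongr
        omega
    _ = (1 + d) ^ r * ((1 + d) ^ N * KK d * symNorm m N a *
      (jb q ^ r * ((jb p)⁻¹) ^ (N - r) * jbR ξ ^ (m - (r : ℝ)))) := by
        rw [mul_pow]; ring
    _ ≤ (1 + d) ^ 3 * ((1 + d) ^ N * KK d * symNorm m N a *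
      (jb q ^ r * ((jb p)⁻¹) ^ (N - r) * jbR ξ ^ (m - (r : ℝ)))) := by
        gcongr
    _ = _ := by rw [pow_add]; ring


lemma taylor3 (f f1 f2 f3 : ℝ → ℂ) (C : ℝ) (h1 : ∀ t, HasDerivAt f (f1 t) t)
    (h2 : ∀ t, HasDerivAt f1 (f2 t) t) (h3 : ∀ t, HasDerivAt f2 (f3 t) t)
    (hb : ∀ t ∈ Set.Icc (0 : ℝ) 1, ‖f3 t‖ ≤ C) :
    ‖f 1 - (f 0 + f1 0 + f2 0 / 2)‖ ≤ C := by
  have hC : 0 ≤ C := (norm_nonneg _).trans (hb 0 (by simp))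
  have key : ∀ (g g' : ℝ → ℂ), (∀ t, HasDerivAt g (g' t) t) → g 0 = 0 →
      (∀ t ∈ Set.Icc (0 : ℝ) 1, ‖g' t‖ ≤ C) → ∀ t ∈ Set.Icc (0 : ℝ) 1, ‖g t‖ ≤ C := by
    intro g g' hg h0 hb t ht
    have := norm_image_sub_le_of_norm_deriv_le_segment' (a := 0) (b := 1) (f := g) (f' := g')
      (C := C) (fun x _ => (hg x).hasDerivWithinAt) (fun x hx => hb x ⟨hx.1, hx.2.le⟩) t ht
    rw [h0, sub_zero, sub_zero] at this
    exact this.trans (mul_le_of_le_one_right hC ht.2)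
  have k2 := key (fun t => f2 t - f2 0) f3 (fun t => (h3 t).sub_const _) (by simp) hb
  have hid : ∀ t : ℝ, HasDerivAt (fun t : ℝ => (t : ℂ)) 1 t := fun t => by
    simpa using (hasDerivAt_id t).ofReal_comp
  have k1 := key (fun t => f1 t - f1 0 - (t : ℂ) * f2 0) (fun t => f2 t - f2 0)
    (fun t => by
      have := ((h2 t).sub_const (f1 0)).sub ((hid t).mul_const (f2 0))
      exact this.congr_deriv (by ring)) (by simp) k2
  have k0 := key (fun t => f t - f 0 - (t : ℂ) * f1 0 - (t : ℂ) * (t : ℂ) * (f2 0 / 2))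
    (fun t => f1 t - f1 0 - (t : ℂ) * f2 0)
    (fun t => by
      have := (((h1 t).sub_const (f 0)).sub ((hid t).mul_const (f1 0))).sub
        (((hid t).mul (hid t)).mul_const (f2 0 / 2))
      exact this.congr_deriv (by ring)) (by simp) k1 1 (by simp)
  refine le_trans (le_of_eq ?_) k0
  congr 1
  push_cast
  ring

lemma taylorAB (A0 A1 A2 A3 B0 B1 B2 B3 : ℝ → ℂ) (C : ℝ)
    (a1 : ∀ t, HasDerivAt A0 (A1 t) t) (a2 : ∀ t, HasDerivAt A1 (A2 t) t)
    (a3 : ∀ t, HasDerivAt A2 (A3 t) t) (b1 : ∀ t, HasDerivAt B0 (B1 t) t)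
    (b2 : ∀ t, HasDerivAt B1 (B2 t) t) (b3 : ∀ t, HasDerivAt B2 (B3 t) t)
    (h30 : ∀ t ∈ Set.Icc (0 : ℝ) 1, ‖A3 t * B0 t‖ ≤ C)
    (h21 : ∀ t ∈ Set.Icc (0 : ℝ) 1, ‖A2 t * B1 t‖ ≤ C)
    (h12 : ∀ t ∈ Set.Icc (0 : ℝ) 1, ‖A1 t * B2 t‖ ≤ C)
    (h03 : ∀ t ∈ Set.Icc (0 : ℝ) 1, ‖A0 t * B3 t‖ ≤ C) :
    ‖A0 1 * B0 1 - (A0 0 * B0 0 + (A1 0 * B0 0 + A0 0 * B1 0) +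
      (A2 0 * B0 0 + 2 * (A1 0 * B1 0) + A0 0 * B2 0) / 2)‖ ≤ 8 * C := by
  refine taylor3 (fun t => A0 t * B0 t) (fun t => A1 t * B0 t + A0 t * B1 t)
    (fun t => A2 t * B0 t + 2 * (A1 t * B1 t) + A0 t * B2 t)
    (fun t => A3 t * B0 t + 3 * (A2 t * B1 t) + 3 * (A1 t * B2 t) + A0 t * B3 t) (8 * C)
    (fun t => (a1 t).mul (b1 t)) ?_ ?_ ?_
  · intro t
    exact (((a2 t).mul (b1 t)).add ((a1 t).mul (b2 t))).congr_deriv (by ring)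
  · intro t
    exact ((((a3 t).mul (b1 t)).add (((a2 t).mul (b2 t)).const_mul 2)).add
      ((a1 t).mul (b3 t))).congr_deriv (by ring)
  · intro t ht
    have e1 := h30 t ht
    have e2 := h21 t ht
    have e3 := h12 t ht
    have e4 := h03 t ht
    calc _ ≤ ‖A3 t * B0 t‖ + ‖3 * (A2 t * B1 t)‖ + ‖3 * (A1 t * B2 t)‖ + ‖A0 t * B3 t‖ := by
          refine (norm_add_le _ _).trans (add_le_add_left ((norm_add_le _ _).trans
            (add_le_add_left (norm_add_le _ _) _)) _)
      _ = ‖A3 t * B0 t‖ + 3 * ‖A2 t * B1 t‖ + 3 * ‖A1 t * B2 t‖ + ‖A0 t * B3 t‖ := by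
          rw [norm_mul 3, norm_mul 3]; simp
      _ ≤ 8 * C := by linarith

lemma rpow_comp {A x y : ℝ} (hx : 0 < x) (hy : 0 < y) (hA : 1 ≤ A) (h1 : x ≤ A * y)
    (h2 : y ≤ A * x) (σ : ℝ) : x ^ σ ≤ A ^ |σ| * y ^ σ := by
  have hA0 : 0 < A := by linarith
  rcases le_total 0 σ with h | h
  · rw [abs_of_nonneg h, ← Real.mul_rpow hA0.le hy.le]
    exact Real.rpow_le_rpow hx.le h1 h
  · rw [abs_of_nonpos h, Real.rpow_neg hA0.le, ← Real.inv_rpow hA0.le,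
      ← Real.mul_rpow (by positivity) hy.le]
    refine Real.rpow_le_rpow_of_nonpos (by positivity) ?_ h
    rw [inv_mul_le_iff₀ hA0]
    exact h2

lemma rnorm_eq (ξ : Vec d) : rnorm ξ = ‖(WithLp.toLp 2 ξ : EuclideanSpace ℝ (Fin d))‖ := by
  rw [EuclideanSpace.norm_eq]
  simp [rnorm]

lemma rnorm_nonneg (ξ : Vec d) : 0 ≤ rnorm ξ := Real.sqrt_nonneg _

lemma rnorm_add (ξ η : Vec d) : rnorm (ξ + η) ≤ rnorm ξ + rnorm η := by
  simp only [rnorm_eq, WithLp.toLp_add]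
  exact norm_add_le _ _

lemma rnorm_smul (t : ℝ) (ξ : Vec d) : rnorm (t • ξ) = |t| * rnorm ξ := by
  simp only [rnorm_eq, WithLp.toLp_smul, norm_smul, Real.norm_eq_abs]

lemma rnorm_neg (ξ : Vec d) : rnorm (-ξ) = rnorm ξ := by
  simp [rnorm]

lemma rnorm_sub (ξ η : Vec d) : rnorm (ξ - η) ≤ rnorm ξ + rnorm η := by
  rw [sub_eq_add_neg, ← rnorm_neg η]
  exact rnorm_add _ _

/-- Coercion of lattice points. -/
def zr (p : Zd d) : Vec d := fun i => (p i : ℝ)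

lemma znorm_zr (p : Zd d) : znorm p = rnorm (zr p) := rfl

lemma jb_zr (p : Zd d) : jb p = jbR (zr p) := rfl

lemma zr_add (p q : Zd d) : zr (p + q) = zr p + zr q := by
  ext i; simp [zr]

lemma zr_sub (p q : Zd d) : zr (p - q) = zr p - zr q := by
  ext i; simp [zr]

lemma mid_eq (p q : Zd d) : mid p q = (1 / 2 : ℝ) • (zr p + zr q) := by
  ext i; simp [zr, mid]; ring

lemma rnorm_le_jbR (ξ : Vec d) : rnorm ξ ≤ jbR ξ := by
  apply Real.sqrt_le_sqrt
  linarith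

lemma jbR_le (ξ : Vec d) : jbR ξ ≤ 1 + rnorm ξ := by
  have h := rnorm_nonneg ξ
  have h2 : rnorm ξ ^ 2 = ∑ i, (ξ i) ^ 2 :=
    Real.sq_sqrt (Finset.sum_nonneg fun i _ => sq_nonneg _)
  apply Real.sqrt_le_iff.2
  exact ⟨by linarith, by nlinarith⟩

lemma cut_le {χ : ℝ → ℝ} (hχ : IsCutoff χ) {ε : ℝ} (hε₀ : 0 < ε) (hε₁ : ε < 1 / 4) (j k : Zd d)
    (h : cutFactor χ ε j k ≠ 0) :
    rnorm (zr j - zr k) ≤ 2 / 5 * (1 + rnorm (zr j + zr k)) := by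
  have h1 : ¬ (8 / 5 ≤ |znorm (j - k) / (ε * jb (j + k))|) := fun h2 => h (hχ.eq_zero _ h2)
  push Not at h1
  have hj := jb_pos (j + k)
  have hz : 0 ≤ znorm (j - k) := Real.sqrt_nonneg _
  rw [abs_of_nonneg (by positivity), div_lt_iff₀ (by positivity)] at h1
  have h2 := jbR_le (zr (j + k))
  rw [← jb_zr, zr_add] at h2
  rw [znorm_zr, zr_sub] at h1
  have : ε * jb (j + k) ≤ 1 / 4 * jb (j + k) := by gcongr
  linarith

lemma cut_ne_one {χ : ℝ → ℝ} (hχ : IsCutoff χ) {ε : ℝ} (hε₀ : 0 < ε) (j k : Zd d)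
    (h : cutFactor χ ε j k ≠ 1) :
    rnorm (zr j + zr k) * ε ≤ rnorm (zr j - zr k) := by
  have h1 : ¬ (|znorm (j - k) / (ε * jb (j + k))| ≤ 5 / 4) := fun h2 => h (hχ.eq_one _ h2)
  push Not at h1
  have hj := jb_pos (j + k)
  have hz : 0 ≤ znorm (j - k) := Real.sqrt_nonneg _
  rw [abs_of_nonneg (by positivity), lt_div_iff₀ (by positivity)] at h1
  have h2 := rnorm_le_jbR (zr (j + k))
  rw [← jb_zr, zr_add] at h2
  rw [znorm_zr, zr_sub] at h1
  have h3 : rnorm (zr j + zr k) * ε ≤ jb (j + k) * ε := by gcongr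
  have h4 : 0 < ε * jb (j + k) := by positivity
  linarith

lemma cut_finite {χ : ℝ → ℝ} (hχ : IsCutoff χ) {ε : ℝ} (hε₀ : 0 < ε) (hε₁ : ε < 1 / 4)
    (j : Zd d) : {k : Zd d | cutFactor χ ε j k ≠ 0}.Finite := by
  set R : ℝ := 10 * (1 + rnorm (zr j))
  refine (Set.finite_Icc (fun _ : Fin d => -⌈R⌉) (fun _ => ⌈R⌉)).subset ?_
  intro k hk
  have h1 := cut_le hχ hε₀ hε₁ j k hk
  have h2 : rnorm (zr j + zr k) ≤ 2 * rnorm (zr j) + rnorm (zr j - zr k) := by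
    have e : zr j + zr k = (zr j + zr j) - (zr j - zr k) := by abel
    rw [e]
    have := rnorm_sub (zr j + zr j) (zr j - zr k)
    have := rnorm_add (zr j) (zr j)
    linarith
  have h3 : rnorm (zr k) ≤ rnorm (zr j) + rnorm (zr j - zr k) := by
    have e : zr k = zr j - (zr j - zr k) := by abel
    have := rnorm_sub (zr j) (zr j - zr k)
    rwa [← e] at this
  have h0 := rnorm_nonneg (zr j)
  have h4 : rnorm (zr k) ≤ R := by
    simp only [R]; linarith
  have h5 : ∀ i, |k i| ≤ ⌈R⌉ := by
    intro i
    have h6 : |(k i : ℝ)| ≤ rnorm (zr k) := by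
      apply Real.abs_le_sqrt
      exact Finset.single_le_sum (f := fun i => (zr k i) ^ 2) (fun i _ => sq_nonneg _)
        (Finset.mem_univ i)
    have h7 : ((|k i| : ℤ) : ℝ) ≤ (⌈R⌉ : ℝ) := by
      push_cast
      exact (h6.trans h4).trans (Int.le_ceil R)
    exact_mod_cast h7
  exact ⟨fun i => (abs_le.1 (h5 i)).1, fun i => (abs_le.1 (h5 i)).2⟩

/-- Comparability of two positive numbers. -/
def Cmp (x y : ℝ) : Prop := x ≤ 20 * y ∧ y ≤ 20 * x

lemma Cmp_of (ξ η : Vec d) (h1 : rnorm ξ ≤ 8 * (1 + rnorm η)) (h2 : rnorm η ≤ 8 * (1 + rnorm ξ)) :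
    Cmp (jbR ξ) (jbR η) := by
  have a1 := jbR_le ξ
  have a2 := jbR_le η
  have a3 := rnorm_le_jbR ξ
  have a4 := rnorm_le_jbR η
  have a5 := jbR_one_le ξ
  have a6 := jbR_one_le η
  constructor <;> linarith

lemma geo_x {χ : ℝ → ℝ} (hχ : IsCutoff χ) {ε : ℝ} (hε₀ : 0 < ε) (hε₁ : ε < 1 / 4) (j k l : Zd d)
    (h1 : cutFactor χ ε j k ≠ 0) (h2 : cutFactor χ ε k l ≠ 0) :
    (∀ t ∈ Set.Icc (0 : ℝ) 1,
      Cmp (jbR (mid j l + t • ((1 / 2 : ℝ) • zr (k - l)))) (jbR (mid j l)) ∧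
      Cmp (jbR (mid j l + t • ((-1 / 2 : ℝ) • zr (j - k)))) (jbR (mid j l))) ∧
    Cmp (jb j) (jbR (mid j l)) ∧ Cmp (jb l) (jbR (mid j l)) := by
  have c1 := cut_le hχ hε₀ hε₁ j k h1
  have c2 := cut_le hχ hε₀ hε₁ k l h2
  rw [zr_sub, zr_sub, mid_eq, jb_zr, jb_zr]
  generalize zr j = j at *
  generalize zr k = k at *
  generalize zr l = l at *
  set ξ : Vec d := (1 / 2 : ℝ) • (j + l) with hξ
  set p := j - k with hp
  set q := k - l with hq
  have hX := rnorm_nonneg ξ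
  have hP := rnorm_nonneg p
  have hQ := rnorm_nonneg q
  have sm : ∀ (t : ℝ) (ξ : Vec d), |t| ≤ 1 / 2 → rnorm (t • ξ) ≤ 1 / 2 * rnorm ξ := by
    intro t ξ ht
    rw [rnorm_smul]
    exact mul_le_mul_of_nonneg_right ht (rnorm_nonneg _)
  have tw : ∀ ξ : Vec d, rnorm ((2 : ℝ) • ξ) = 2 * rnorm ξ := by
    intro ξ; rw [rnorm_smul]; norm_num
  have e1 : rnorm (j + k) ≤ 2 * rnorm ξ + rnorm q := by
    have : j + k = (2 : ℝ) • ξ + q := by ext i; simp [hξ, hq]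
    rw [this, ← tw]; exact rnorm_add _ _
  have e2 : rnorm (k + l) ≤ 2 * rnorm ξ + rnorm p := by
    have : k + l = (2 : ℝ) • ξ - p := by ext i; simp [hξ, hp]; ring
    rw [this, ← tw]; exact rnorm_sub _ _
  have e3 : rnorm (j + k) ≤ 2 * rnorm j + rnorm p := by
    have : j + k = (2 : ℝ) • j - p := by ext i; simp [hp]; ring
    rw [this, ← tw]; exact rnorm_sub _ _
  have e3' : rnorm (j + k) ≤ 2 * rnorm k + rnorm p := by
    have : j + k = (2 : ℝ) • k + p := by ext i; simp [hp]; ring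
    rw [this, ← tw]; exact rnorm_add _ _
  have e4 : rnorm (k + l) ≤ 2 * rnorm k + rnorm q := by
    have : k + l = (2 : ℝ) • k - q := by ext i; simp [hq]; ring
    rw [this, ← tw]; exact rnorm_sub _ _
  have e4' : rnorm (k + l) ≤ 2 * rnorm l + rnorm q := by
    have : k + l = (2 : ℝ) • l + q := by ext i; simp [hq]; ring
    rw [this, ← tw]; exact rnorm_add _ _
  have e5 : rnorm k ≤ rnorm j + rnorm p := by
    have : k = j - p := by simp [hp]
    conv_lhs => rw [this]
    exact rnorm_sub _ _
  have e5' : rnorm k ≤ rnorm l + rnorm q := by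
    have : k = l + q := by simp [hq]
    conv_lhs => rw [this]
    exact rnorm_add _ _
  have hpq : rnorm ((1 / 2 : ℝ) • (p + q)) ≤ 1 / 2 * (rnorm p + rnorm q) := by
    refine (sm _ _ (by norm_num [abs_le])).trans ?_
    have := rnorm_add p q
    linarith
  have e6 : rnorm j ≤ rnorm ξ + 1 / 2 * (rnorm p + rnorm q) := by
    have : j = ξ + (1 / 2 : ℝ) • (p + q) := by ext i; simp [hξ, hp, hq]; ring
    conv_lhs => rw [this]
    exact (rnorm_add _ _).trans (by linarith)
  have e6' : rnorm ξ ≤ rnorm j + 1 / 2 * (rnorm p + rnorm q) := by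
    have : ξ = j - (1 / 2 : ℝ) • (p + q) := by ext i; simp [hξ, hp, hq]; ring
    conv_lhs => rw [this]
    exact (rnorm_sub _ _).trans (by linarith)
  have e7 : rnorm l ≤ rnorm ξ + 1 / 2 * (rnorm p + rnorm q) := by
    have : l = ξ - (1 / 2 : ℝ) • (p + q) := by ext i; simp [hξ, hp, hq]; ring
    conv_lhs => rw [this]
    exact (rnorm_sub _ _).trans (by linarith)
  have e7' : rnorm ξ ≤ rnorm l + 1 / 2 * (rnorm p + rnorm q) := by
    have : ξ = l + (1 / 2 : ℝ) • (p + q) := by ext i; simp [hξ, hp, hq]; ring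
    conv_lhs => rw [this]
    exact (rnorm_add _ _).trans (by linarith)
  refine ⟨fun t ht => ⟨?_, ?_⟩, ?_, ?_⟩
  · have n1 : rnorm (t • ((1 / 2 : ℝ) • q)) ≤ 1 / 2 * rnorm q := by
      rw [smul_smul]
      refine sm _ _ ?_
      rw [abs_le]; constructor <;> linarith [ht.1, ht.2]
    have n2 := rnorm_add ξ (t • ((1 / 2 : ℝ) • q))
    have n3 : rnorm ξ ≤ rnorm (ξ + t • ((1 / 2 : ℝ) • q)) + rnorm (t • ((1 / 2 : ℝ) • q)) := by
      have := rnorm_sub (ξ + t • ((1 / 2 : ℝ) • q)) (t • ((1 / 2 : ℝ) • q))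
      rwa [add_sub_cancel_right] at this
    apply Cmp_of <;> linarith
  · have n1 : rnorm (t • ((-1 / 2 : ℝ) • p)) ≤ 1 / 2 * rnorm p := by
      rw [smul_smul]
      refine sm _ _ ?_
      rw [abs_le]; constructor <;> linarith [ht.1, ht.2]
    have n2 := rnorm_add ξ (t • ((-1 / 2 : ℝ) • p))
    have n3 : rnorm ξ ≤ rnorm (ξ + t • ((-1 / 2 : ℝ) • p)) + rnorm (t • ((-1 / 2 : ℝ) • p)) := by
      have := rnorm_sub (ξ + t • ((-1 / 2 : ℝ) • p)) (t • ((-1 / 2 : ℝ) • p))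
      rwa [add_sub_cancel_right] at this
    apply Cmp_of <;> linarith
  · apply Cmp_of <;> linarith
  · apply Cmp_of <;> linarith

lemma geo_y {χ : ℝ → ℝ} (hχ : IsCutoff χ) {ε : ℝ} (hε₀ : 0 < ε) (hε₁ : ε < 1 / 4) (j l : Zd d)
    (h1 : cutFactor χ ε j l ≠ 0) :
    Cmp (jb j) (jbR (mid j l)) ∧ Cmp (jb l) (jbR (mid j l)) := by
  have c1 := cut_le hχ hε₀ hε₁ j l h1
  rw [mid_eq, jb_zr, jb_zr]
  generalize zr j = j at *
  generalize zr l = l at *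
  set ξ : Vec d := (1 / 2 : ℝ) • (j + l) with hξ
  set p := j - l with hp
  have hX := rnorm_nonneg ξ
  have hP := rnorm_nonneg p
  have e1 : rnorm (j + l) = 2 * rnorm ξ := by rw [hξ, rnorm_smul]; norm_num; ring
  have hp2 : rnorm ((1 / 2 : ℝ) • p) = 1 / 2 * rnorm p := by rw [rnorm_smul]; norm_num
  have e6 : rnorm j ≤ rnorm ξ + 1 / 2 * rnorm p := by
    have : j = ξ + (1 / 2 : ℝ) • p := by ext i; simp [hξ, hp]; ring
    conv_lhs => rw [this]
    exact (rnorm_add _ _).trans (by linarith)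
  have e6' : rnorm ξ ≤ rnorm j + 1 / 2 * rnorm p := by
    have : ξ = j - (1 / 2 : ℝ) • p := by ext i; simp [hξ, hp]; ring
    conv_lhs => rw [this]
    exact (rnorm_sub _ _).trans (by linarith)
  have e7 : rnorm l ≤ rnorm ξ + 1 / 2 * rnorm p := by
    have : l = ξ - (1 / 2 : ℝ) • p := by ext i; simp [hξ, hp]; ring
    conv_lhs => rw [this]
    exact (rnorm_sub _ _).trans (by linarith)
  have e7' : rnorm ξ ≤ rnorm l + 1 / 2 * rnorm p := by
    have : ξ = l + (1 / 2 : ℝ) • p := by ext i; simp [hξ, hp]; ring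
    conv_lhs => rw [this]
    exact (rnorm_add _ _).trans (by linarith)
  constructor <;> apply Cmp_of <;> linarith

lemma geo_z {χ : ℝ → ℝ} (hχ : IsCutoff χ) {ε : ℝ} (hε₀ : 0 < ε) (hε₁ : ε < 1 / 4) (j k l : Zd d)
    (h : cutFactor χ ε j k * cutFactor χ ε k l ≠ cutFactor χ ε j l) :
    jbR (mid j l) ≤ 2 / ε * (jb (j - k) * jb (k - l)) := by
  have hc : cutFactor χ ε j k ≠ 1 ∨ cutFactor χ ε k l ≠ 1 ∨ cutFactor χ ε j l ≠ 1 := by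
    by_contra hcon
    push Not at hcon
    apply h
    rw [hcon.1, hcon.2.1, hcon.2.2, one_mul]
  have hp1 := jb_one_le (j - k)
  have hq1 := jb_one_le (k - l)
  have hpW : jb (j - k) ≤ jb (j - k) * jb (k - l) := le_mul_of_one_le_right (by linarith) hq1
  have hqW : jb (k - l) ≤ jb (j - k) * jb (k - l) := le_mul_of_one_le_left (by linarith) hp1
  set W := jb (j - k) * jb (k - l) with hW
  have hP := rnorm_le_jbR (zr (j - k))
  have hQ := rnorm_le_jbR (zr (k - l))
  rw [← jb_zr, zr_sub] at hP hQ
  have hxi := jbR_le (mid j l)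
  have hs : rnorm (zr j + zr l) = 2 * rnorm (mid j l) := by
    rw [mid_eq, rnorm_smul]; norm_num; ring
  have t1 : rnorm (zr j + zr l) ≤ rnorm (zr j + zr k) + rnorm (zr k - zr l) := by
    have e : zr j + zr l = (zr j + zr k) - (zr k - zr l) := by abel
    rw [e]; exact rnorm_sub _ _
  have t2 : rnorm (zr j + zr l) ≤ rnorm (zr k + zr l) + rnorm (zr j - zr k) := by
    have e : zr j + zr l = (zr k + zr l) + (zr j - zr k) := by abel
    rw [e]; exact rnorm_add _ _
  have t3 : rnorm (zr j - zr l) ≤ rnorm (zr j - zr k) + rnorm (zr k - zr l) := by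
    have e : zr j - zr l = (zr j - zr k) + (zr k - zr l) := by abel
    rw [e]; exact rnorm_add _ _
  have hW1 : 1 ≤ W := hp1.trans hpW
  have he : ε * W ≤ 1 / 4 * W := by gcongr
  rw [div_mul_eq_mul_div, le_div_iff₀ hε₀]
  have hm : jbR (mid j l) * ε ≤ (1 + rnorm (mid j l)) * ε := by gcongr
  have hmul : ∀ x, x ≤ W → x * ε ≤ W * ε := fun x hx => by gcongr
  have m1 := hmul 1 hW1
  have m2 := hmul _ (hP.trans hpW)
  have m3 := hmul _ (hQ.trans hqW)
  have hadd : ∀ x y : ℝ, x ≤ y → x * ε ≤ y * ε := fun x y hx => by gcongr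
  rcases hc with hc | hc | hc
  · have b := cut_ne_one hχ hε₀ _ _ hc
    have := hadd _ _ t1
    rw [hs] at this
    linarith
  · have b := cut_ne_one hχ hε₀ _ _ hc
    have := hadd _ _ t2
    rw [hs] at this
    linarith
  · have b := cut_ne_one hχ hε₀ _ _ hc
    rw [hs] at b
    linarith

/-- Directional derivatives of the coefficient of the first symbol. -/
def AA (a : Sym d) (p q : Zd d) (r : ℕ) (ξ : Vec d) : ℂ := DA a p ((1 / 2 : ℝ) • zr q) r [] ξ

/-- Directional derivatives of the coefficient of the second symbol. -/
def BB (b : Sym d) (p q : Zd d) (r : ℕ) (ξ : Vec d) : ℂ := DA b q ((-1 / 2 : ℝ) • zr p) r [] ξ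

/-- Second order Taylor polynomial. -/
def PP (a b : Sym d) (p q : Zd d) (ξ : Vec d) : ℂ :=
  AA a p q 0 ξ * BB b p q 0 ξ + (AA a p q 1 ξ * BB b p q 0 ξ + AA a p q 0 ξ * BB b p q 1 ξ) +
    (AA a p q 2 ξ * BB b p q 0 ξ + 2 * (AA a p q 1 ξ * BB b p q 1 ξ)
      + AA a p q 0 ξ * BB b p q 2 ξ) / 2

/-- Constant in the coefficient bounds. -/
def K1 (d N : ℕ) : ℝ := (1 + d) ^ (N + 3) * KK d

lemma K1_nonneg (N : ℕ) : 0 ≤ K1 d N := mul_nonneg (by positivity) KK_nonneg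

lemma prod_bound {m₁ m₂ : ℝ} {N : ℕ} {a b : Sym d} (ha : InSymClass m₁ N a)
    (hb : InSymClass m₂ N b) (hN : 3 ≤ N) (p q : Zd d) (ξ η₁ η₂ : Vec d)
    (h1 : Cmp (jbR η₁) (jbR ξ)) (h2 : Cmp (jbR η₂) (jbR ξ)) (i i' : ℕ) (hi : i + i' ≤ 3) :
    ‖AA a p q i η₁ * BB b p q i' η₂‖ ≤ K1 d N ^ 2 * symNorm m₁ N a * symNorm m₂ N b *
      (20 : ℝ) ^ (|m₁| + |m₂| + 6) *
      ((((jb p)⁻¹) * ((jb q)⁻¹)) ^ (N - (i + i')) * jbR ξ ^ (m₁ + m₂ - ((i + i' : ℕ) : ℝ))) := by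
  have hp := jb_pos p
  have hq := jb_pos q
  have half : ∀ (t : ℝ) (ht : |t| ≤ 1) (p : Zd d) (i : Fin d), |(t • zr p) i| ≤ jb p := by
    intro t ht p i
    simp only [Pi.smul_apply, smul_eq_mul, abs_mul]
    exact (mul_le_of_le_one_left (abs_nonneg _) ht).trans (abs_le_jb p i)
  have hA := DA_final ha p q η₁ ((1 / 2 : ℝ) • zr q) (half _ (by norm_num [abs_le]) q) i
    (by omega) (by omega)
  have hB := DA_final hb q p η₂ ((-1 / 2 : ℝ) • zr p) (half _ (by norm_num [abs_le]) p) i'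
    (by omega) (by omega)
  have hx := jbR_pos ξ
  have hx1 := jbR_pos η₁
  have hx2 := jbR_pos η₂
  have r1 := rpow_comp hx1 hx (by norm_num) h1.1 h1.2 (m₁ - (i : ℝ))
  have r2 := rpow_comp hx2 hx (by norm_num) h2.1 h2.2 (m₂ - (i' : ℝ))
  have hiR : (i : ℝ) + i' ≤ 3 := by exact_mod_cast hi
  have hi0 : (0 : ℝ) ≤ i := Nat.cast_nonneg i
  have hi0' : (0 : ℝ) ≤ i' := Nat.cast_nonneg i'
  have ab : |m₁ - (i : ℝ)| + |m₂ - (i' : ℝ)| ≤ |m₁| + |m₂| + 6 := by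
    have := abs_sub m₁ (i : ℝ)
    have := abs_sub m₂ (i' : ℝ)
    rw [abs_of_nonneg hi0] at *
    rw [abs_of_nonneg hi0'] at *
    linarith
  have hSa := symNorm_nonneg m₁ N a
  have hSb := symNorm_nonneg m₂ N b
  have hK := KK_nonneg (d := d)
  have hw : (jb q ^ i * ((jb p)⁻¹) ^ (N - i)) * (jb p ^ i' * ((jb q)⁻¹) ^ (N - i')) =
      (((jb p)⁻¹) * ((jb q)⁻¹)) ^ (N - (i + i')) := by
    have e1 : ∀ (x : ℝ), 0 < x → ∀ u v, u + v ≤ N →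
        x ^ u * (x⁻¹) ^ (N - v) = (x⁻¹) ^ (N - (u + v)) := by
      intro x hx u v huv
      have : N - v = u + (N - (u + v)) := by omega
      rw [this, pow_add, ← mul_assoc, ← mul_pow, mul_inv_cancel₀ hx.ne', one_pow, one_mul]
    have e2 := e1 (jb q) hq i i' (by omega)
    have e3 := e1 (jb p) hp i' i (by omega)
    rw [add_comm i' i] at e3
    rw [mul_pow, ← e2, ← e3]
    ring
  have hX : jbR η₁ ^ (m₁ - (i : ℝ)) * jbR η₂ ^ (m₂ - (i' : ℝ)) ≤
      (20 : ℝ) ^ (|m₁| + |m₂| + 6) * jbR ξ ^ (m₁ + m₂ - ((i + i' : ℕ) : ℝ)) := by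
    calc _ ≤ (20 ^ |m₁ - (i : ℝ)| * jbR ξ ^ (m₁ - (i : ℝ))) *
          (20 ^ |m₂ - (i' : ℝ)| * jbR ξ ^ (m₂ - (i' : ℝ))) := by gcongr
      _ = 20 ^ (|m₁ - (i : ℝ)| + |m₂ - (i' : ℝ)|) * jbR ξ ^ (m₁ + m₂ - ((i + i' : ℕ) : ℝ)) := by
          have : m₁ + m₂ - ((i + i' : ℕ) : ℝ) = (m₁ - i) + (m₂ - i') := by push_cast; ring
          rw [this, Real.rpow_add (by norm_num), Real.rpow_add hx]
          ring
      _ ≤ _ := by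
          gcongr
          norm_num
  rw [norm_mul]
  calc ‖AA a p q i η₁‖ * ‖BB b p q i' η₂‖
      ≤ ((1 + d) ^ (N + 3) * KK d * symNorm m₁ N a *
      (jb q ^ i * ((jb p)⁻¹) ^ (N - i) * jbR η₁ ^ (m₁ - (i : ℝ)))) *
      ((1 + d) ^ (N + 3) * KK d * symNorm m₂ N b *
      (jb p ^ i' * ((jb q)⁻¹) ^ (N - i') * jbR η₂ ^ (m₂ - (i' : ℝ)))) :=
        mul_le_mul hA hB (norm_nonneg _) ((norm_nonneg _).trans hA)
    _ = K1 d N ^ 2 * symNorm m₁ N a * symNorm m₂ N b *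
      ((((jb p)⁻¹) * ((jb q)⁻¹)) ^ (N - (i + i')) *
        (jbR η₁ ^ (m₁ - (i : ℝ)) * jbR η₂ ^ (m₂ - (i' : ℝ)))) := by
        rw [← hw, K1]; ring
    _ ≤ K1 d N ^ 2 * symNorm m₁ N a * symNorm m₂ N b *
      ((((jb p)⁻¹) * ((jb q)⁻¹)) ^ (N - (i + i')) *
        ((20 : ℝ) ^ (|m₁| + |m₂| + 6) * jbR ξ ^ (m₁ + m₂ - ((i + i' : ℕ) : ℝ)))) := by gcongr
    _ = _ := by ring

lemma Cmp_refl {x : ℝ} (hx : 0 < x) : Cmp x x := ⟨by linarith, by linarith⟩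

/-- The kernel of the remainder. -/
def ker (χ : ℝ → ℝ) (ε : ℝ) (a b : Sym d) (j k l : Zd d) : ℂ :=
  ((cutFactor χ ε j k * cutFactor χ ε k l : ℝ) : ℂ) *
      (symCoeff a (j - k) (mid j k) * symCoeff b (k - l) (mid k l)) -
    ((cutFactor χ ε j l : ℝ) : ℂ) * PP a b (j - k) (k - l) (mid j l)

lemma ker_bound {m₁ m₂ : ℝ} {N : ℕ} {a b : Sym d} (ha : InSymClass m₁ N a)
    (hb : InSymClass m₂ N b) (hN : 3 ≤ N) {χ : ℝ → ℝ} (hχ : IsCutoff χ) {ε : ℝ} (hε₀ : 0 < ε)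
    (hε₁ : ε < 1 / 4) (j k l : Zd d) :
    ‖ker χ ε a b j k l‖ ≤ (8 + 5 * (2 / ε) ^ 3) *
      (K1 d N ^ 2 * symNorm m₁ N a * symNorm m₂ N b * (20 : ℝ) ^ (|m₁| + |m₂| + 6) *
      ((((jb (j - k))⁻¹) * ((jb (k - l))⁻¹)) ^ (N - 3) * jbR (mid j l) ^ (m₁ + m₂ - 3))) := by
  have mem : ∀ j k : Zd d, cutFactor χ ε j k ∈ Set.Icc (0 : ℝ) 1 := fun j k => hχ.mem _
  have hx0 := mul_nonneg (mem j k).1 (mem k l).1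
  have hx1 := mul_le_one₀ (mem j k).2 (mem k l).1 (mem k l).2
  have hy := mem j l
  set x : ℝ := cutFactor χ ε j k * cutFactor χ ε k l with hxdef
  set y : ℝ := cutFactor χ ε j l with hydef
  set ξ := mid j l with hξ
  set p := j - k with hp
  set q := k - l with hq
  set Θ : ℝ := K1 d N ^ 2 * symNorm m₁ N a * symNorm m₂ N b * (20 : ℝ) ^ (|m₁| + |m₂| + 6)
    with hΘ
  have hΘ0 : 0 ≤ Θ := by
    have := symNorm_nonneg m₁ N a
    have := symNorm_nonneg m₂ N b
    positivity
  have hpp := jb_pos p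
  have hqq := jb_pos q
  have hX := jbR_pos ξ
  set w := ((jb p)⁻¹) * ((jb q)⁻¹) with hw
  have hw0 : 0 < w := by positivity
  set B : ℝ := Θ * (w ^ (N - 3) * jbR ξ ^ (m₁ + m₂ - 3)) with hB
  have hB0 : 0 ≤ B := by positivity
  have hid : ker χ ε a b j k l = (x : ℂ) *
      (symCoeff a p (mid j k) * symCoeff b q (mid k l) - PP a b p q ξ) +
      ((x - y : ℝ) : ℂ) * PP a b p q ξ := by
    simp only [ker, hxdef, hydef, hp, hq, hξ]
    push_cast
    ring
  have T1 : ‖(x : ℂ) * (symCoeff a p (mid j k) * symCoeff b q (mid k l) - PP a b p q ξ)‖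
      ≤ 8 * B := by
    by_cases hx : x = 0
    · rw [hx]; simp; positivity
    have hjk : cutFactor χ ε j k ≠ 0 := left_ne_zero_of_mul hx
    have hkl : cutFactor χ ε k l ≠ 0 := right_ne_zero_of_mul hx
    obtain ⟨g1, -, -⟩ := geo_x hχ hε₀ hε₁ j k l hjk hkl
    rw [← hξ, ← hp, ← hq] at g1
    have hca := class_contDiff ha
    have hcb := class_contDiff hb
    have tay := taylorAB
      (fun t => AA a p q 0 (ξ + t • ((1 / 2 : ℝ) • zr q)))
      (fun t => AA a p q 1 (ξ + t • ((1 / 2 : ℝ) • zr q)))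
      (fun t => AA a p q 2 (ξ + t • ((1 / 2 : ℝ) • zr q)))
      (fun t => AA a p q 3 (ξ + t • ((1 / 2 : ℝ) • zr q)))
      (fun t => BB b p q 0 (ξ + t • ((-1 / 2 : ℝ) • zr p)))
      (fun t => BB b p q 1 (ξ + t • ((-1 / 2 : ℝ) • zr p)))
      (fun t => BB b p q 2 (ξ + t • ((-1 / 2 : ℝ) • zr p)))
      (fun t => BB b p q 3 (ξ + t • ((-1 / 2 : ℝ) • zr p))) B
      (fun t => DA_hasDerivAt a N hca p ξ _ t 0 [] (by simp; omega))
      (fun t => DA_hasDerivAt a N hca p ξ _ t 1 [] (by simp; omega))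
      (fun t => DA_hasDerivAt a N hca p ξ _ t 2 [] (by simp; omega))
      (fun t => DA_hasDerivAt b N hcb q ξ _ t 0 [] (by simp; omega))
      (fun t => DA_hasDerivAt b N hcb q ξ _ t 1 [] (by simp; omega))
      (fun t => DA_hasDerivAt b N hcb q ξ _ t 2 [] (by simp; omega))
      (fun t ht => by
        simpa using prod_bound ha hb hN p q ξ _ _ (g1 t ht).1 (g1 t ht).2 3 0 (by norm_num))
      (fun t ht => by
        simpa using prod_bound ha hb hN p q ξ _ _ (g1 t ht).1 (g1 t ht).2 2 1 (by norm_num))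
      (fun t ht => by
        simpa using prod_bound ha hb hN p q ξ _ _ (g1 t ht).1 (g1 t ht).2 1 2 (by norm_num))
      (fun t ht => by
        simpa using prod_bound ha hb hN p q ξ _ _ (g1 t ht).1 (g1 t ht).2 0 3 (by norm_num))
    have e1 : ξ + (1 : ℝ) • ((1 / 2 : ℝ) • zr q) = mid j k := by
      ext i; simp [hξ, hq, mid, zr]; ring
    have e2 : ξ + (1 : ℝ) • ((-1 / 2 : ℝ) • zr p) = mid k l := by
      ext i; simp [hξ, hp, mid, zr]; ring
    have e3 : ∀ v : Vec d, ξ + (0 : ℝ) • v = ξ := by intro v; simp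
    simp only [e1, e2, e3] at tay
    rw [norm_mul, Complex.norm_real, Real.norm_of_nonneg hx0]
    refine le_trans (mul_le_of_le_one_left (norm_nonneg _) hx1) ?_
    exact tay
  have T2 : ‖((x - y : ℝ) : ℂ) * PP a b p q ξ‖ ≤ 5 * (2 / ε) ^ 3 * B := by
    by_cases hxy : x = y
    · rw [hxy]; simp; positivity
    have g := geo_z hχ hε₀ hε₁ j k l hxy
    rw [← hξ, ← hp, ← hq] at g
    have he : 1 ≤ 2 / ε := by rw [le_div_iff₀ hε₀]; linarith
    have piece : ∀ i i' : ℕ, i + i' ≤ 3 →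
        ‖AA a p q i ξ * BB b p q i' ξ‖ ≤ (2 / ε) ^ 3 * B := by
      intro i i' hi
      refine (prod_bound ha hb hN p q ξ ξ ξ (Cmp_refl hX) (Cmp_refl hX) i i' hi).trans ?_
      rw [← hΘ, ← hw, hB]
      have hle : w ^ (N - (i + i')) * jbR ξ ^ (m₁ + m₂ - ((i + i' : ℕ) : ℝ)) ≤
          (2 / ε) ^ 3 * (w ^ (N - 3) * jbR ξ ^ (m₁ + m₂ - 3)) := by
        generalize i + i' = r at *
        have e1 : jbR ξ ^ (m₁ + m₂ - (r : ℝ)) = jbR ξ ^ (m₁ + m₂ - 3) * jbR ξ ^ (3 - r) := by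
          rw [← Real.rpow_natCast, ← Real.rpow_add hX, Nat.cast_sub hi]
          congr 1
          push_cast
          ring
        have e2 : w ^ (N - r) = w ^ (N - 3) * w ^ (3 - r) := by
          rw [← pow_add]; congr 1; omega
        have e3 : jbR ξ * w ≤ 2 / ε := by
          calc jbR ξ * w ≤ (2 / ε * (jb p * jb q)) * w := by gcongr
            _ = 2 / ε := by rw [hw]; field_simp
        rw [e1, e2]
        calc w ^ (N - 3) * w ^ (3 - r) * (jbR ξ ^ (m₁ + m₂ - 3) * jbR ξ ^ (3 - r))
            = (jbR ξ * w) ^ (3 - r) * (w ^ (N - 3) * jbR ξ ^ (m₁ + m₂ - 3)) := by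
              rw [mul_pow]; ring
          _ ≤ (2 / ε) ^ (3 - r) * (w ^ (N - 3) * jbR ξ ^ (m₁ + m₂ - 3)) := by gcongr
          _ ≤ (2 / ε) ^ 3 * (w ^ (N - 3) * jbR ξ ^ (m₁ + m₂ - 3)) := by
              gcongr
              omega
      calc _ ≤ Θ * ((2 / ε) ^ 3 * (w ^ (N - 3) * jbR ξ ^ (m₁ + m₂ - 3))) := by gcongr
        _ = _ := by ring
    have hPP : ‖PP a b p q ξ‖ ≤ 5 * ((2 / ε) ^ 3 * B) := by
      have h00 := piece 0 0 (by norm_num)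
      have h10 := piece 1 0 (by norm_num)
      have h01 := piece 0 1 (by norm_num)
      have h20 := piece 2 0 (by norm_num)
      have h11 := piece 1 1 (by norm_num)
      have h02 := piece 0 2 (by norm_num)
      unfold PP
      generalize AA a p q 0 ξ * BB b p q 0 ξ = z0 at *
      generalize AA a p q 1 ξ * BB b p q 0 ξ = z1 at *
      generalize AA a p q 0 ξ * BB b p q 1 ξ = z2 at *
      generalize AA a p q 2 ξ * BB b p q 0 ξ = z3 at *
      generalize AA a p q 1 ξ * BB b p q 1 ξ = z4 at *
      generalize AA a p q 0 ξ * BB b p q 2 ξ = z5 at *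
      have n1 := norm_add_le (z0 + (z1 + z2)) ((z3 + 2 * z4 + z5) / 2)
      have n2 := norm_add_le z0 (z1 + z2)
      have n3 := norm_add_le z1 z2
      have n4 := norm_add_le (z3 + 2 * z4) z5
      have n5 := norm_add_le z3 (2 * z4)
      have n6 : ‖2 * z4‖ = 2 * ‖z4‖ := by rw [norm_mul]; simp
      have n7 : ‖(z3 + 2 * z4 + z5) / 2‖ = ‖z3 + 2 * z4 + z5‖ / 2 := by rw [norm_div]; simp
      linarith
    have hab : |x - y| ≤ 1 := by
      rw [abs_le]; constructor <;> linarith [hy.1, hy.2]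
    rw [norm_mul, Complex.norm_real, Real.norm_eq_abs]
    refine le_trans (mul_le_of_le_one_left (norm_nonneg _) hab) ?_
    linarith
  rw [hid]
  refine (norm_add_le _ _).trans ?_
  have : (8 + 5 * (2 / ε) ^ 3) * B = 8 * B + 5 * (2 / ε) ^ 3 * B := by ring
  rw [this]
  exact add_le_add T1 T2

/-- Constant of the weighted kernel bound. -/
def C0 (d N : ℕ) (m₁ m₂ s ε : ℝ) : ℝ :=
  (8 + 5 * (2 / ε) ^ 3) * (K1 d N ^ 2 * (20 : ℝ) ^ (|m₁| + |m₂| + 6)) *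
    ((20 : ℝ) ^ |s - m₁ - m₂ + 3| * (20 : ℝ) ^ |s|)

lemma ker_bound' {m₁ m₂ : ℝ} {N : ℕ} {a b : Sym d} (ha : InSymClass m₁ N a)
    (hb : InSymClass m₂ N b) (hN : 3 ≤ N) {χ : ℝ → ℝ} (hχ : IsCutoff χ) {ε : ℝ} (hε₀ : 0 < ε)
    (hε₁ : ε < 1 / 4) (s : ℝ) (j k l : Zd d) :
    jb j ^ (s - m₁ - m₂ + 3) * ‖ker χ ε a b j k l‖ ≤
      C0 d N m₁ m₂ s ε * symNorm m₁ N a * symNorm m₂ N b *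
      ((((jb (j - k))⁻¹) ^ (N - 3) * (((jb (k - l))⁻¹)) ^ (N - 3)) * jb l ^ s) := by
  have hSa := symNorm_nonneg m₁ N a
  have hSb := symNorm_nonneg m₂ N b
  have hpp := jb_pos (j - k)
  have hqq := jb_pos (k - l)
  have hjj := jb_pos j
  have hll := jb_pos l
  have hX := jbR_pos (mid j l)
  have hK := K1_nonneg (d := d) N
  by_cases h0 : cutFactor χ ε j k * cutFactor χ ε k l = 0 ∧ cutFactor χ ε j l = 0
  · have : ker χ ε a b j k l = 0 := by
      rw [ker, h0.1, h0.2]; simp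
    rw [this, norm_zero, mul_zero]
    unfold C0
    positivity
  have hcmp : Cmp (jb j) (jbR (mid j l)) ∧ Cmp (jb l) (jbR (mid j l)) := by
    by_cases h1 : cutFactor χ ε j l = 0
    · have h2 : cutFactor χ ε j k * cutFactor χ ε k l ≠ 0 := fun h => h0 ⟨h, h1⟩
      exact (geo_x hχ hε₀ hε₁ j k l (left_ne_zero_of_mul h2) (right_ne_zero_of_mul h2)).2
    · exact geo_y hχ hε₀ hε₁ j l h1
  have r1 := rpow_comp hjj hX (by norm_num) hcmp.1.1 hcmp.1.2 (s - m₁ - m₂ + 3)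
  have r2 := rpow_comp hX hll (by norm_num) hcmp.2.2 hcmp.2.1 s
  have kb := ker_bound ha hb hN hχ hε₀ hε₁ j k l
  calc jb j ^ (s - m₁ - m₂ + 3) * ‖ker χ ε a b j k l‖
      ≤ (20 ^ |s - m₁ - m₂ + 3| * jbR (mid j l) ^ (s - m₁ - m₂ + 3)) *
      ((8 + 5 * (2 / ε) ^ 3) *
      (K1 d N ^ 2 * symNorm m₁ N a * symNorm m₂ N b * (20 : ℝ) ^ (|m₁| + |m₂| + 6) *
      ((((jb (j - k))⁻¹) * ((jb (k - l))⁻¹)) ^ (N - 3) * jbR (mid j l) ^ (m₁ + m₂ - 3)))) := by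
        gcongr
    _ = (8 + 5 * (2 / ε) ^ 3) * (K1 d N ^ 2 * (20 : ℝ) ^ (|m₁| + |m₂| + 6)) *
        20 ^ |s - m₁ - m₂ + 3| * symNorm m₁ N a * symNorm m₂ N b *
        ((((jb (j - k))⁻¹) ^ (N - 3) * (((jb (k - l))⁻¹)) ^ (N - 3)) * jbR (mid j l) ^ s) := by
        have : jbR (mid j l) ^ s =
            jbR (mid j l) ^ (s - m₁ - m₂ + 3) * jbR (mid j l) ^ (m₁ + m₂ - 3) := by
          rw [← Real.rpow_add hX]; congr 1; ring
        rw [this, mul_pow]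
        ring
    _ ≤ (8 + 5 * (2 / ε) ^ 3) * (K1 d N ^ 2 * (20 : ℝ) ^ (|m₁| + |m₂| + 6)) *
        20 ^ |s - m₁ - m₂ + 3| * symNorm m₁ N a * symNorm m₂ N b *
        ((((jb (j - k))⁻¹) ^ (N - 3) * (((jb (k - l))⁻¹)) ^ (N - 3)) * (20 ^ |s| * jb l ^ s)) := by
        gcongr
    _ = _ := by unfold C0; ring

lemma fCoeff_add' (u v : Fn d) (hu : Continuous u) (hv : Continuous v) (n : Zd d) :
    fCoeff (fun x => u x + v x) n = fCoeff u n + fCoeff v n := by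
  simp only [fCoeff_eq, add_mul]
  rw [← mul_add]
  congr 1
  exact integral_add (integrableOn_box _ (hu.mul (eneg_cont n)))
    (integrableOn_box _ (hv.mul (eneg_cont n)))

lemma fCoeff_smul' (c : ℂ) (u : Fn d) (n : Zd d) :
    fCoeff (fun x => c * u x) n = c * fCoeff u n := by
  simp only [fCoeff_eq, mul_assoc]
  rw [integral_const_mul]
  ring

lemma fCoeff_zero' (n : Zd d) : fCoeff (fun _ => (0 : ℂ)) n = 0 := by
  simp [fCoeff_eq]

/-- Convolution representation of a Fourier coefficient. -/
def Cv (j l : Zd d) (w : Fn d) (G : Zd d → ℂ) : Prop :=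
  Continuous w ∧ HasSum (fun k => kap d * G k) (fCoeff w (j - l))

lemma Cv.add {j l : Zd d} {w w' : Fn d} {G G' : Zd d → ℂ} (h : Cv j l w G) (h' : Cv j l w' G') :
    Cv j l (fun x => w x + w' x) (fun k => G k + G' k) := by
  refine ⟨h.1.add h'.1, ?_⟩
  rw [fCoeff_add' _ _ h.1 h'.1]
  exact HasSum.congr_fun (h.2.add h'.2) (fun k => by ring)

lemma Cv.smul {j l : Zd d} {w : Fn d} {G : Zd d → ℂ} (c : ℂ) (h : Cv j l w G) :
    Cv j l (fun x => c * w x) (fun k => c * G k) := by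
  refine ⟨continuous_const.mul h.1, ?_⟩
  rw [fCoeff_smul']
  exact HasSum.congr_fun (h.2.mul_left c) (fun k => by ring)

lemma Cv.sum {j l : Zd d} {w : Fin d → Fn d} {G : Fin d → Zd d → ℂ}
    (h : ∀ i, Cv j l (w i) (G i)) (S : Finset (Fin d)) :
    Cv j l (fun x => ∑ i ∈ S, w i x) (fun k => ∑ i ∈ S, G i k) := by
  classical
  induction S using Finset.induction_on with
  | empty =>
    refine ⟨by simpa using continuous_const, ?_⟩
    simp only [Finset.sum_empty, mul_zero, fCoeff_zero']
    exact hasSum_zero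
  | insert i S hi ih =>
    simp only [Finset.sum_insert hi]
    exact (h i).add ih

lemma Cv_prod {m₁ m₂ : ℝ} {N : ℕ} {a b : Sym d} (ha : InSymClass m₁ N a)
    (hb : InSymClass m₂ N b) (hN : d + 3 ≤ N) (j l : Zd d) (ξ : Vec d)
    (L L' : List (Fin d ⊕ Fin d)) (hL : L.length ≤ 2) (hL' : L'.length ≤ 2) :
    Cv j l (fun x => mderiv L a x ξ * mderiv L' b x ξ)
      (fun k => symCoeff (mderiv L a) (j - k) ξ * symCoeff (mderiv L' b) (k - l) ξ) := by
  have c : ∀ {m : ℝ} {a : Sym d}, InSymClass m N a → ∀ L : List (Fin d ⊕ Fin d), L.length ≤ 2 →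
      Continuous (fun x => mderiv L a x ξ) := by
    intro m a ha L hL
    have := (mderiv_contDiff a N (class_contDiff ha) L 0 (by omega)).continuous
    exact this.comp (by fun_prop : Continuous fun x : Vec d => (x, ξ))
  refine ⟨(c ha L hL).mul (c hb L' hL'), ?_⟩
  exact fCoeff_conv' _ _ (c ha L hL) (c hb L' hL') (mderiv_per b hb.2.1 L' ξ)
    (symCoeff_summable hb L' (by omega) ξ) j l

lemma symCoeff_pdxi_pdx (b : Sym d) (hb : ContDiff ℝ 2 (Function.uncurry b)) (hp : SPer b)
    (i k : Fin d) (q : Zd d) (ξ : Vec d) :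
    symCoeff (pdxi i (pdx k b)) q ξ = Complex.I * (q k : ℂ) * symCoeff (pdxi i b) q ξ := by
  have hb1 : ContDiff ℝ 1 (Function.uncurry b) := hb.of_le (by norm_num)
  have h1 := symCoeff_hasDerivAt (pdx k b)
    (by exact_mod_cast pdx_contDiff b 1 (by exact_mod_cast hb) k) q ξ (Pi.single i 1) 0
  have h2 := (symCoeff_hasDerivAt b hb1 q ξ (Pi.single i 1) 0).const_mul (Complex.I * (q k : ℂ))
  simp only [symCoeff_pdx b hb1 hp] at h1
  have h3 := h1.unique h2
  have e : ∀ F : Fin d → ℂ, ∑ i', (((Pi.single i 1 : Vec d) i' : ℝ) : ℂ) * F i' = F i := by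
    intro F
    rw [Finset.sum_eq_single i]
    · simp
    · intro i' _ h; simp [h]
    · simp
  rw [e, e] at h3
  simpa using h3

lemma PP_alg (a0 b0 : ℂ) (a1 b1 : Fin d → ℂ) (a2 b2 : Fin d → Fin d → ℂ) (p q : Fin d → ℂ) :
    a0 * b0 + 1 / (2 * Complex.I) * ∑ j, (a1 j * (Complex.I * q j * b0)
        + (-1) * ((Complex.I * p j * a0) * b1 j))
      + (-(1 / 8)) * ∑ j, ∑ k, (a2 j k * (Complex.I * q j * (Complex.I * q k * b0))
        + (-2) * ((Complex.I * p j * a1 k) * (Complex.I * q k * b1 j))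
        + (Complex.I * p j * (Complex.I * p k * a0)) * b2 j k) =
    a0 * b0 + ((∑ j, (1 / 2 * q j) * a1 j) * b0 + a0 * ∑ j, (-1 / 2 * p j) * b1 j)
      + ((∑ k, (1 / 2 * q k) * ∑ j, (1 / 2 * q j) * a2 j k) * b0
        + 2 * ((∑ k, (1 / 2 * q k) * a1 k) * (∑ j, (-1 / 2 * p j) * b1 j))
        + a0 * ∑ k, (-1 / 2 * p k) * ∑ j, (-1 / 2 * p j) * b2 j k) / 2 := by
  have hI : Complex.I * Complex.I = -1 := Complex.I_mul_I
  have e1 : 1 / (2 * Complex.I) * ∑ j, (a1 j * (Complex.I * q j * b0)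
        + (-1) * ((Complex.I * p j * a0) * b1 j)) =
      (∑ j, (1 / 2 * q j) * a1 j) * b0 + a0 * ∑ j, (-1 / 2 * p j) * b1 j := by
    rw [Finset.mul_sum, Finset.sum_mul, Finset.mul_sum, ← Finset.sum_add_distrib]
    refine Finset.sum_congr rfl fun j _ => ?_
    have := Complex.I_ne_zero
    field_simp
  have e2 : (-(1 / 8) : ℂ) * ∑ j, ∑ k, (a2 j k * (Complex.I * q j * (Complex.I * q k * b0))
        + (-2) * ((Complex.I * p j * a1 k) * (Complex.I * q k * b1 j))
        + (Complex.I * p j * (Complex.I * p k * a0)) * b2 j k) =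
      ((∑ k, (1 / 2 * q k) * ∑ j, (1 / 2 * q j) * a2 j k) * b0
        + 2 * ((∑ k, (1 / 2 * q k) * a1 k) * (∑ j, (-1 / 2 * p j) * b1 j))
        + a0 * ∑ k, (-1 / 2 * p k) * ∑ j, (-1 / 2 * p j) * b2 j k) / 2 := by
    rw [Finset.sum_comm, Finset.sum_mul_sum]
    simp only [Finset.mul_sum, Finset.sum_mul, ← Finset.sum_add_distrib, Finset.sum_div]
    refine Finset.sum_congr rfl fun k _ => Finset.sum_congr rfl fun j _ => ?_
    linear_combination (-1 / 8 * (a2 j k * q j * q k * b0 - 2 * p j * a1 k * q k * b1 j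
      + p j * p k * a0 * b2 j k)) * hI
  rw [e1, e2]

lemma PP_sum {m₁ m₂ : ℝ} {N : ℕ} {a b : Sym d} (ha : InSymClass m₁ N a)
    (hb : InSymClass m₂ N b) (hN : d + 3 ≤ N) (j l : Zd d) (ξ : Vec d) :
    HasSum (fun k => kap d * PP a b (j - k) (k - l) ξ)
      (symCoeff (fun x ξ => a x ξ * b x ξ) (j - l) ξ +
        1 / (2 * Complex.I) * symCoeff (poisson a b) (j - l) ξ
        + (-(1 / 8)) * symCoeff (sigmaB a b) (j - l) ξ) := by
  have hP := Cv_prod ha hb hN j l ξ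
  have ha2 : ContDiff ℝ 2 (Function.uncurry a) :=
    (class_contDiff ha).of_le (by exact_mod_cast (by omega : 2 ≤ N))
  have hb2 : ContDiff ℝ 2 (Function.uncurry b) :=
    (class_contDiff hb).of_le (by exact_mod_cast (by omega : 2 ≤ N))
  have ha1 : ContDiff ℝ 1 (Function.uncurry a) := ha2.of_le (by norm_num)
  have hb1 : ContDiff ℝ 1 (Function.uncurry b) := hb2.of_le (by norm_num)
  have q0 := hP [] [] (by simp) (by simp)
  have q1 := (Cv.sum (fun i => (hP [Sum.inr i] [Sum.inl i] (by simp) (by simp)).add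
    ((hP [Sum.inl i] [Sum.inr i] (by simp) (by simp)).smul (-1))) Finset.univ).smul
      (1 / (2 * Complex.I))
  have q2 := (Cv.sum (fun i => Cv.sum (fun k =>
    ((hP [Sum.inr i, Sum.inr k] [Sum.inl i, Sum.inl k] (by simp) (by simp)).add
    ((hP [Sum.inl i, Sum.inr k] [Sum.inr i, Sum.inl k] (by simp) (by simp)).smul (-2))).add
    (hP [Sum.inl i, Sum.inl k] [Sum.inr i, Sum.inr k] (by simp) (by simp))) Finset.univ)
      Finset.univ).smul (-(1 / 8))
  have q := ((q0.add q1).add q2).2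
  rw [fCoeff_add' _ _ (q0.add q1).1 q2.1, fCoeff_add' _ _ q0.1 q1.1, fCoeff_smul',
    fCoeff_smul'] at q
  have v1 : symCoeff (poisson a b) (j - l) ξ = fCoeff (fun x => ∑ i : Fin d,
      (mderiv [Sum.inr i] a x ξ * mderiv [Sum.inl i] b x ξ
      + (-1) * (mderiv [Sum.inl i] a x ξ * mderiv [Sum.inr i] b x ξ))) (j - l) := by
    unfold symCoeff
    congr 1
    ext x
    refine Finset.sum_congr rfl fun i _ => ?_
    simp only [mderiv_cons_inl, mderiv_cons_inr]
    change pdxi i a x ξ * pdx i b x ξ - pdx i a x ξ * pdxi i b x ξ =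
      pdxi i a x ξ * pdx i b x ξ + (-1) * (pdx i a x ξ * pdxi i b x ξ)
    ring
  have v2 : symCoeff (sigmaB a b) (j - l) ξ = fCoeff (fun x => ∑ i : Fin d, ∑ k : Fin d,
      (mderiv [Sum.inr i, Sum.inr k] a x ξ * mderiv [Sum.inl i, Sum.inl k] b x ξ
      + (-2) * (mderiv [Sum.inl i, Sum.inr k] a x ξ * mderiv [Sum.inr i, Sum.inl k] b x ξ)
      + mderiv [Sum.inl i, Sum.inl k] a x ξ * mderiv [Sum.inr i, Sum.inr k] b x ξ)) (j - l) := by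
    unfold symCoeff
    congr 1
    ext x
    refine Finset.sum_congr rfl fun i _ => Finset.sum_congr rfl fun k _ => ?_
    change pdxi i (pdxi k a) x ξ * pdx i (pdx k b) x ξ
      - 2 * pdx i (pdxi k a) x ξ * pdxi i (pdx k b) x ξ
      + pdx i (pdx k a) x ξ * pdxi i (pdxi k b) x ξ =
      pdxi i (pdxi k a) x ξ * pdx i (pdx k b) x ξ
      + (-2) * (pdx i (pdxi k a) x ξ * pdxi i (pdx k b) x ξ)
      + pdx i (pdx k a) x ξ * pdxi i (pdxi k b) x ξ
    ring
  rw [v1, v2]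
  refine HasSum.congr_fun q (fun k => ?_)
  congr 1
  have A1 := pdxi_contDiff a 1 (by exact_mod_cast ha2)
  have A2 := pdx_contDiff a 1 (by exact_mod_cast ha2)
  have B2 := pdx_contDiff b 1 (by exact_mod_cast hb2)
  have alg := PP_alg (symCoeff a (j - k) ξ) (symCoeff b (k - l) ξ)
    (fun i => symCoeff (pdxi i a) (j - k) ξ) (fun i => symCoeff (pdxi i b) (k - l) ξ)
    (fun i i' => symCoeff (pdxi i (pdxi i' a)) (j - k) ξ)
    (fun i i' => symCoeff (pdxi i (pdxi i' b)) (k - l) ξ)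
    (fun i => (((j - k) i : ℤ) : ℂ)) (fun i => (((k - l) i : ℤ) : ℂ))
  have w1 : ∀ i, symCoeff (mderiv [Sum.inl i] b) (k - l) ξ =
      Complex.I * (((k - l) i : ℤ) : ℂ) * symCoeff b (k - l) ξ :=
    fun i => symCoeff_pdx b hb1 hb.2.1 i _ _
  have w2 : ∀ i, symCoeff (mderiv [Sum.inl i] a) (j - k) ξ =
      Complex.I * (((j - k) i : ℤ) : ℂ) * symCoeff a (j - k) ξ :=
    fun i => symCoeff_pdx a ha1 ha.2.1 i _ _
  have w3 : ∀ i i', symCoeff (mderiv [Sum.inl i, Sum.inl i'] b) (k - l) ξ =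
      Complex.I * (((k - l) i : ℤ) : ℂ) * (Complex.I * (((k - l) i' : ℤ) : ℂ) *
        symCoeff b (k - l) ξ) := by
    intro i i'
    have := symCoeff_pdx (pdx i' b) (B2 i') (pdx_per b hb.2.1 i') i (k - l) ξ
    rw [symCoeff_pdx b hb1 hb.2.1] at this
    exact this
  have w4 : ∀ i i', symCoeff (mderiv [Sum.inl i, Sum.inl i'] a) (j - k) ξ =
      Complex.I * (((j - k) i : ℤ) : ℂ) * (Complex.I * (((j - k) i' : ℤ) : ℂ) *
        symCoeff a (j - k) ξ) := by
    intro i i'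
    have := symCoeff_pdx (pdx i' a) (A2 i') (pdx_per a ha.2.1 i') i (j - k) ξ
    rw [symCoeff_pdx a ha1 ha.2.1] at this
    exact this
  have w5 : ∀ i i', symCoeff (mderiv [Sum.inl i, Sum.inr i'] a) (j - k) ξ =
      Complex.I * (((j - k) i : ℤ) : ℂ) * symCoeff (pdxi i' a) (j - k) ξ :=
    fun i i' => symCoeff_pdx (pdxi i' a) (A1 i') (pdxi_per a ha.2.1 i') i (j - k) ξ
  have w6 : ∀ i i', symCoeff (mderiv [Sum.inr i, Sum.inl i'] b) (k - l) ξ =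
      Complex.I * (((k - l) i' : ℤ) : ℂ) * symCoeff (pdxi i b) (k - l) ξ :=
    fun i i' => symCoeff_pdxi_pdx b hb2 hb.2.1 i i' (k - l) ξ
  simp only [w1, w2, w3, w4, w5, w6]
  refine Eq.trans ?_ alg.symm
  have z1 : ∀ i, ((((1 / 2 : ℝ) • zr (k - l)) i : ℝ) : ℂ) = 1 / 2 * (((k - l) i : ℤ) : ℂ) := by
    intro i; simp [zr]
  have z2 : ∀ i, ((((-1 / 2 : ℝ) • zr (j - k)) i : ℝ) : ℂ) = -1 / 2 * (((j - k) i : ℤ) : ℂ) := by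
    intro i; simp [zr]
  unfold PP AA BB
  simp only [DA, z1, z2]
  rfl

lemma paraC_fin (χ : ℝ → ℝ) (ε : ℝ) (e : Sym d) (c : Seq d) (j : Zd d) (T : Finset (Zd d))
    (hT : ∀ l, l ∉ T → cutFactor χ ε j l = 0) :
    paraC χ ε e c j = kap d * ∑ l ∈ T,
      ((cutFactor χ ε j l : ℝ) : ℂ) * symCoeff e (j - l) (mid j l) * c l := by
  have h : paraC χ ε e c j = kap d * ∑' l,
      ((cutFactor χ ε j l : ℝ) : ℂ) * symCoeff e (j - l) (mid j l) * c l := rfl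
  rw [h, tsum_eq_sum (s := T)]
  intro l hl
  rw [hT l hl]; simp

lemma exists_ST {χ : ℝ → ℝ} (hχ : IsCutoff χ) {ε : ℝ}
    (hε₀ : 0 < ε) (hε₁ : ε < 1 / 4) (j : Zd d) :
    ∃ S T : Finset (Zd d), (∀ k, k ∉ S → cutFactor χ ε j k = 0) ∧
      (∀ l, l ∉ T → cutFactor χ ε j l = 0) ∧
      (∀ k ∈ S, ∀ l, l ∉ T → cutFactor χ ε k l = 0) := by
  classical
  have fin : ∀ j : Zd d, ∃ S : Finset (Zd d), ∀ k, k ∉ S → cutFactor χ ε j k = 0 := by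
    intro j
    refine ⟨(cut_finite hχ hε₀ hε₁ j).toFinset, fun k hk => ?_⟩
    by_contra h
    exact hk (by simp [h])
  choose S hS using fin
  refine ⟨S j, S j ∪ (S j).biUnion S, hS j, fun l hl => hS j l fun h => hl ?_,
    fun k hk l hl => hS k l fun h => hl ?_⟩
  · exact Finset.mem_union_left _ h
  · exact Finset.mem_union_right _ (Finset.mem_biUnion.2 ⟨k, hk, h⟩)

lemma first_fin (χ : ℝ → ℝ) (ε : ℝ) (a b : Sym d) (c : Seq d) (j : Zd d)
    (S T : Finset (Zd d)) (hS : ∀ k, k ∉ S → cutFactor χ ε j k = 0)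
    (hT : ∀ k ∈ S, ∀ l, l ∉ T → cutFactor χ ε k l = 0) :
    paraC χ ε a (paraC χ ε b c) j = ∑ l ∈ T, ∑ k ∈ S, kap d * (kap d *
      (((cutFactor χ ε j k * cutFactor χ ε k l : ℝ) : ℂ) *
      (symCoeff a (j - k) (mid j k) * symCoeff b (k - l) (mid k l)) * c l)) := by
  rw [paraC_fin χ ε a _ j S hS, Finset.mul_sum, Finset.sum_comm]
  refine Finset.sum_congr rfl fun k hk => ?_
  rw [paraC_fin χ ε b c k T (hT k hk), Finset.mul_sum, Finset.mul_sum, Finset.mul_sum]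
  refine Finset.sum_congr rfl fun l hl => ?_
  rw [Complex.ofReal_mul]
  ring

lemma R_term {m₁ m₂ : ℝ} {N : ℕ} {a b : Sym d} (ha : InSymClass m₁ N a)
    (hb : InSymClass m₂ N b) (hN : d + 3 ≤ N) (χ : ℝ → ℝ) (ε : ℝ)
    (c : Seq d) (j l : Zd d) (S : Finset (Zd d)) (hS : ∀ k, k ∉ S → cutFactor χ ε j k = 0) :
    (∑ k ∈ S, kap d * (kap d *
      (((cutFactor χ ε j k * cutFactor χ ε k l : ℝ) : ℂ) *
      (symCoeff a (j - k) (mid j k) * symCoeff b (k - l) (mid k l)) * c l)))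
      - kap d * (((cutFactor χ ε j l : ℝ) : ℂ) *
          symCoeff (fun x ξ => a x ξ * b x ξ) (j - l) (mid j l) * c l)
      - 1 / (2 * Complex.I) * (kap d * (((cutFactor χ ε j l : ℝ) : ℂ) *
          symCoeff (poisson a b) (j - l) (mid j l) * c l))
      + 1 / 8 * (kap d * (((cutFactor χ ε j l : ℝ) : ℂ) *
          symCoeff (sigmaB a b) (j - l) (mid j l) * c l)) =
      ∑' k, kap d * (kap d * (ker χ ε a b j k l * c l)) := by
  have h1 : HasSum (fun k => kap d * (kap d *
      (((cutFactor χ ε j k * cutFactor χ ε k l : ℝ) : ℂ) *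
      (symCoeff a (j - k) (mid j k) * symCoeff b (k - l) (mid k l)) * c l)))
      (∑ k ∈ S, kap d * (kap d *
      (((cutFactor χ ε j k * cutFactor χ ε k l : ℝ) : ℂ) *
      (symCoeff a (j - k) (mid j k) * symCoeff b (k - l) (mid k l)) * c l))) := by
    apply hasSum_sum_of_ne_finset_zero
    intro k hk
    rw [hS k hk]; simp
  have h2 := (PP_sum ha hb hN j l (mid j l)).mul_left
    (kap d * (((cutFactor χ ε j l : ℝ) : ℂ) * c l))
  have h3 := (h1.sub h2).tsum_eq
  have h4 : (∑' k, kap d * (kap d * (ker χ ε a b j k l * c l))) = _ :=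
    (tsum_congr fun k => by simp only [ker]; ring).trans h3
  rw [h4]
  ring

lemma R_eq {m₁ m₂ : ℝ} {N : ℕ} {a b : Sym d} (ha : InSymClass m₁ N a)
    (hb : InSymClass m₂ N b) (hN : d + 3 ≤ N) {χ : ℝ → ℝ} (hχ : IsCutoff χ) {ε : ℝ}
    (hε₀ : 0 < ε) (hε₁ : ε < 1 / 4) (c : Seq d) (j : Zd d) :
    ∃ T : Finset (Zd d), paraC χ ε a (paraC χ ε b c) j
            - paraC χ ε (fun x ξ => a x ξ * b x ξ) c j
            - 1 / (2 * Complex.I) * paraC χ ε (poisson a b) c j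
            + 1 / 8 * paraC χ ε (sigmaB a b) c j =
      ∑ l ∈ T, ∑' k, kap d * (kap d * (ker χ ε a b j k l * c l)) := by
  obtain ⟨S, T, hS, hTj, hTk⟩ := exists_ST hχ hε₀ hε₁ j
  refine ⟨T, ?_⟩
  rw [first_fin χ ε a b c j S T hS hTk, paraC_fin χ ε _ c j T hTj,
    paraC_fin χ ε (poisson a b) c j T hTj, paraC_fin χ ε (sigmaB a b) c j T hTj]
  rw [Finset.mul_sum, Finset.mul_sum, Finset.mul_sum, Finset.mul_sum, Finset.mul_sum]
  rw [← Finset.sum_sub_distrib, ← Finset.sum_sub_distrib, ← Finset.sum_add_distrib]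
  exact Finset.sum_congr rfl fun l hl => R_term ha hb hN χ ε c j l S hS

open scoped ENNReal

lemma cs_enn (g u : Zd d → ℝ≥0∞) :
    (∑' k, g k * u k) ^ 2 ≤ 2 * (∑' k, g k) * ∑' k, g k * u k ^ 2 := by
  have key : ∀ x y : ℝ≥0∞, x * y ≤ x ^ 2 + y ^ 2 := by
    intro x y
    rcases le_total x y with h | h
    · calc x * y ≤ y * y := by gcongr
        _ = y ^ 2 := (sq y).symm
        _ ≤ _ := le_add_self
    · calc x * y ≤ x * x := by gcongr
        _ = x ^ 2 := (sq x).symm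
        _ ≤ _ := le_self_add
  calc (∑' k, g k * u k) ^ 2 = ∑' k, ∑' k', (g k * u k) * (g k' * u k') := by
        rw [sq, ← ENNReal.tsum_mul_right]
        simp only [ENNReal.tsum_mul_left]
    _ ≤ ∑' k, ∑' k', ((g k * u k ^ 2) * g k' + g k * (g k' * u k' ^ 2)) := by
        refine ENNReal.tsum_le_tsum fun k => ENNReal.tsum_le_tsum fun k' => ?_
        calc (g k * u k) * (g k' * u k') = (g k * g k') * (u k * u k') := by ring
          _ ≤ (g k * g k') * (u k ^ 2 + u k' ^ 2) := by gcongr; exact key _ _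
          _ = _ := by ring
    _ = _ := by
        simp only [ENNReal.tsum_add, ENNReal.tsum_mul_left, ENNReal.tsum_mul_right]
        ring

lemma young_enn (g u : Zd d → ℝ≥0∞) :
    ∑' j, (∑' k, g (j - k) * u k) ^ 2 ≤ 2 * (∑' k, g k) ^ 2 * ∑' k, u k ^ 2 := by
  have hG : ∀ j : Zd d, ∑' k, g (j - k) = ∑' k, g k := fun j =>
    (Equiv.subLeft j).tsum_eq g
  have hG' : ∀ k : Zd d, ∑' j, g (j - k) = ∑' k, g k := fun k =>
    (Equiv.subRight k).tsum_eq g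
  calc ∑' j, (∑' k, g (j - k) * u k) ^ 2
      ≤ ∑' j, 2 * (∑' k, g k) * ∑' k, g (j - k) * u k ^ 2 := by
        refine ENNReal.tsum_le_tsum fun j => ?_
        have := cs_enn (fun k => g (j - k)) u
        rwa [hG j] at this
    _ = 2 * (∑' k, g k) * ∑' k, ∑' j, g (j - k) * u k ^ 2 := by
        rw [ENNReal.tsum_mul_left, ENNReal.tsum_comm]
    _ = _ := by
        simp only [ENNReal.tsum_mul_right, hG', ENNReal.tsum_mul_left]
        ring

lemma double_young (g u : Zd d → ℝ≥0∞) :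
    ∑' j, (∑' l, ∑' k, g (j - k) * g (k - l) * u l) ^ 2 ≤
      4 * (∑' k, g k) ^ 4 * ∑' k, u k ^ 2 := by
  have e : ∀ j, ∑' l, ∑' k, g (j - k) * g (k - l) * u l =
      ∑' k, g (j - k) * ∑' l, g (k - l) * u l := by
    intro j
    rw [ENNReal.tsum_comm]
    refine tsum_congr fun k => ?_
    rw [← ENNReal.tsum_mul_left]
    exact tsum_congr fun l => by ring
  simp only [e]
  refine (young_enn g _).trans ?_
  calc _ ≤ 2 * (∑' k, g k) ^ 2 * (2 * (∑' k, g k) ^ 2 * ∑' k, u k ^ 2) := by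
        gcongr
        exact young_enn g u
    _ = _ := by ring

lemma hs_enn (s : ℝ) (c : Seq d) :
    hsNormSq s c = (∑' n, ENNReal.ofReal (jb n ^ s * ‖c n‖) ^ 2).toReal := by
  rw [ENNReal.tsum_toReal_eq (fun n => ENNReal.pow_ne_top ENNReal.ofReal_ne_top)]
  refine tsum_congr fun n => ?_
  have h0 : 0 ≤ jb n ^ s := Real.rpow_nonneg (jb_pos n).le _
  rw [ENNReal.toReal_pow, ENNReal.toReal_ofReal (mul_nonneg h0 (norm_nonneg _)), mul_pow,
    ← Real.rpow_natCast (jb n ^ s), ← Real.rpow_mul (jb_pos n).le]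
  congr 2
  push_cast
  ring

lemma hs_fin {s : ℝ} {c : Seq d} (hc : InHsSeq s c) :
    ∑' n, ENNReal.ofReal (jb n ^ s * ‖c n‖) ^ 2 ≠ ⊤ := by
  have : (fun n => ENNReal.ofReal (jb n ^ s * ‖c n‖) ^ 2) =
      fun n => ENNReal.ofReal (jb n ^ (2 * s) * ‖c n‖ ^ 2) := by
    funext n
    have h0 : 0 ≤ jb n ^ s := Real.rpow_nonneg (jb_pos n).le _
    rw [← ENNReal.ofReal_pow (mul_nonneg h0 (norm_nonneg _)), mul_pow,
      ← Real.rpow_natCast (jb n ^ s), ← Real.rpow_mul (jb_pos n).le]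
    congr 3
    push_cast
    ring
  rw [this]
  exact Summable.tsum_ofReal_ne_top hc

lemma pt_bound {m₁ m₂ : ℝ} {N : ℕ} {a b : Sym d} (ha : InSymClass m₁ N a)
    (hb : InSymClass m₂ N b) (hN : d + 3 ≤ N) {χ : ℝ → ℝ} (hχ : IsCutoff χ) {ε : ℝ}
    (hε₀ : 0 < ε) (hε₁ : ε < 1 / 4) (s : ℝ) (c : Seq d) (j : Zd d) (z : ℂ) (T : Finset (Zd d))
    (hz : z = ∑ l ∈ T, ∑' k, kap d * (kap d * (ker χ ε a b j k l * c l))) :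
    ENNReal.ofReal (jb j ^ (s - m₁ - m₂ + 3) * ‖z‖) ≤
      ENNReal.ofReal (‖kap d‖ ^ 2 * (C0 d N m₁ m₂ s ε * symNorm m₁ N a * symNorm m₂ N b)) *
      ∑' l, ∑' k, ENNReal.ofReal (((jb (j - k))⁻¹) ^ (N - 3)) *
        ENNReal.ofReal (((jb (k - l))⁻¹) ^ (N - 3)) * ENNReal.ofReal (jb l ^ s * ‖c l‖) := by
  have h0 : 0 ≤ jb j ^ (s - m₁ - m₂ + 3) := Real.rpow_nonneg (jb_pos j).le _
  have hj : ∀ p : Zd d, 0 ≤ ((jb p)⁻¹) ^ (N - 3) := fun p =>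
    pow_nonneg (inv_nonneg.2 (jb_pos p).le) _
  have e1 : ‖z‖ₑ ≤ ∑' l, ∑' k, ‖kap d * (kap d * (ker χ ε a b j k l * c l))‖ₑ := by
    rw [hz]
    refine (enorm_sum_le _ _).trans ((Finset.sum_le_sum fun l _ => ?_).trans
      (ENNReal.sum_le_tsum T))
    exact enorm_tsum_le_tsum_enorm
  rw [ENNReal.ofReal_mul h0, ofReal_norm_eq_enorm, ← ENNReal.tsum_mul_left]
  refine (mul_le_mul_right e1 _).trans ?_
  rw [← ENNReal.tsum_mul_left]
  refine ENNReal.tsum_le_tsum fun l => ?_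
  rw [← ENNReal.tsum_mul_left, ← ENNReal.tsum_mul_left]
  refine ENNReal.tsum_le_tsum fun k => ?_
  rw [← ofReal_norm_eq_enorm, ← ENNReal.ofReal_mul h0, ← ENNReal.ofReal_mul (hj _),
    ← ENNReal.ofReal_mul (mul_nonneg (hj _) (hj _)),
    ← ENNReal.ofReal_mul' (mul_nonneg (mul_nonneg (hj _) (hj _))
      (mul_nonneg (Real.rpow_nonneg (jb_pos l).le _) (norm_nonneg _)))]
  refine ENNReal.ofReal_le_ofReal ?_
  have kb := ker_bound' ha hb (by omega) hχ hε₀ hε₁ s j k l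
  have := mul_le_mul_of_nonneg_left kb
    (mul_nonneg (pow_nonneg (norm_nonneg (kap d)) 2) (norm_nonneg (c l)))
  rw [norm_mul, norm_mul, norm_mul]
  calc _ = ‖kap d‖ ^ 2 * ‖c l‖ * (jb j ^ (s - m₁ - m₂ + 3) * ‖ker χ ε a b j k l‖) := by ring
    _ ≤ _ := this
    _ = _ := by ring

lemma final_bound {m₁ m₂ : ℝ} {N : ℕ} {a b : Sym d} (ha : InSymClass m₁ N a)
    (hb : InSymClass m₂ N b) (hN : d + 3 < N) {χ : ℝ → ℝ} (hχ : IsCutoff χ) {ε : ℝ}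
    (hε₀ : 0 < ε) (hε₁ : ε < 1 / 4) (s : ℝ) (c : Seq d) (hc : InHsSeq s c) (R : Seq d)
    (hR : ∀ j, ∃ T : Finset (Zd d),
      R j = ∑ l ∈ T, ∑' k, kap d * (kap d * (ker χ ε a b j k l * c l)))
    (hK : 0 ≤ C0 d N m₁ m₂ s ε * symNorm m₁ N a * symNorm m₂ N b) :
    hsNorm (s - m₁ - m₂ + 3) R ≤
      ‖kap d‖ ^ 2 * (C0 d N m₁ m₂ s ε * symNorm m₁ N a * symNorm m₂ N b) * 2 *
      (∑' p : Zd d, ((jb p)⁻¹) ^ (N - 3)) ^ 2 * hsNorm s c := by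
  set K := ‖kap d‖ ^ 2 * (C0 d N m₁ m₂ s ε * symNorm m₁ N a * symNorm m₂ N b) with hKd
  have hK0 : 0 ≤ K := mul_nonneg (pow_nonneg (norm_nonneg _) _) hK
  have hj : ∀ p : Zd d, 0 ≤ ((jb p)⁻¹) ^ (N - 3) := fun p =>
    pow_nonneg (inv_nonneg.2 (jb_pos p).le) _
  have hsum := summable_jb (d := d) (N - 3) (by omega)
  set G := ∑' p : Zd d, ((jb p)⁻¹) ^ (N - 3) with hG
  have hG0 : 0 ≤ G := tsum_nonneg hj
  have hGe : ∑' p : Zd d, ENNReal.ofReal (((jb p)⁻¹) ^ (N - 3)) = ENNReal.ofReal G :=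
    (ENNReal.ofReal_tsum_of_nonneg hj hsum).symm
  have step : ∑' j, ENNReal.ofReal (jb j ^ (s - m₁ - m₂ + 3) * ‖R j‖) ^ 2 ≤
      ENNReal.ofReal K ^ 2 * (4 * ENNReal.ofReal G ^ 4 *
        ∑' n, ENNReal.ofReal (jb n ^ s * ‖c n‖) ^ 2) := by
    have dy := double_young (fun p : Zd d => ENNReal.ofReal (((jb p)⁻¹) ^ (N - 3)))
      (fun n => ENNReal.ofReal (jb n ^ s * ‖c n‖))
    rw [hGe] at dy
    refine le_trans ?_ (mul_le_mul_right dy _)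
    rw [← ENNReal.tsum_mul_left]
    refine ENNReal.tsum_le_tsum fun j => ?_
    obtain ⟨T, hT⟩ := hR j
    rw [← mul_pow]
    exact pow_le_pow_left' (pt_bound ha hb hN.le hχ hε₀ hε₁ s c j (R j) T hT) 2
  have hfin := hs_fin hc
  have hsq : hsNormSq (s - m₁ - m₂ + 3) R ≤ (K * 2 * G ^ 2) ^ 2 * hsNormSq s c := by
    rw [hs_enn, hs_enn s c]
    refine (ENNReal.toReal_mono ?_ step).trans (le_of_eq ?_)
    · refine ENNReal.mul_ne_top (ENNReal.pow_ne_top ENNReal.ofReal_ne_top)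
        (ENNReal.mul_ne_top (ENNReal.mul_ne_top (by norm_num)
          (ENNReal.pow_ne_top ENNReal.ofReal_ne_top)) hfin)
    · rw [ENNReal.toReal_mul, ENNReal.toReal_mul, ENNReal.toReal_mul, ENNReal.toReal_pow,
        ENNReal.toReal_pow, ENNReal.toReal_ofReal hK0, ENNReal.toReal_ofReal hG0,
        ENNReal.toReal_ofNat]
      ring
  have hP : 0 ≤ K * 2 * G ^ 2 := by positivity
  calc hsNorm (s - m₁ - m₂ + 3) R ≤ Real.sqrt ((K * 2 * G ^ 2) ^ 2 * hsNormSq s c) :=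
        Real.sqrt_le_sqrt hsq
    _ = K * 2 * G ^ 2 * hsNorm s c := by
        rw [Real.sqrt_mul (sq_nonneg _), Real.sqrt_sq hP]; rfl


/-- Proposition 2.5(i): symbolic calculus for the composition of two
paradifferential operators:
`T_a ∘ T_b = T_{ab} + (1/2i) T_{{a,b}} - (1/8) T_{σ(a,b)} + R(a,b)` with
`‖R(a,b)h‖_{H^{s-m₁-m₂+3}} ≤ C |a|_{𝒩^{m₁}_{s₀+4}} |b|_{𝒩^{m₂}_{s₀+4}} ‖h‖_{H^s}`.
The remainder is encoded as the difference of the two sides. -/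
theorem statement_5 (d : ℕ) (hd : 1 ≤ d) (s₀ : ℕ) (hs₀ : d < s₀) (m₁ m₂ : ℝ)
    (χ : ℝ → ℝ) (hχ : IsCutoff χ) (ε : ℝ) (hε₀ : 0 < ε) (hε₁ : ε < 1 / 4) (s : ℝ) :
    ∃ C > (0 : ℝ), ∀ (a b : Sym d) (c : Seq d),
      InSymClass m₁ (s₀ + 4) a → InSymClass m₂ (s₀ + 4) b → InHsSeq s c →
      hsNorm (s - m₁ - m₂ + 3)
          (fun j => paraC χ ε a (paraC χ ε b c) j
            - paraC χ ε (fun x ξ => a x ξ * b x ξ) c j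
            - 1 / (2 * Complex.I) * paraC χ ε (poisson a b) c j
            + 1 / 8 * paraC χ ε (sigmaB a b) c j)
        ≤ C * symNorm m₁ (s₀ + 4) a * symNorm m₂ (s₀ + 4) b * hsNorm s c := by
  have hC0 : 0 ≤ C0 d (s₀ + 4) m₁ m₂ s ε := by unfold C0; positivity
  refine ⟨‖kap d‖ ^ 2 * C0 d (s₀ + 4) m₁ m₂ s ε * 2 *
    (∑' p : Zd d, ((jb p)⁻¹) ^ (s₀ + 4 - 3)) ^ 2 + 1, by positivity, ?_⟩
  intro a b c ha hb hc
  have hA := symNorm_nonneg m₁ (s₀ + 4) a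
  have hB := symNorm_nonneg m₂ (s₀ + 4) b
  have hH : 0 ≤ hsNorm s c := Real.sqrt_nonneg _
  have key := final_bound ha hb (by omega) hχ hε₀ hε₁ s c hc _
    (fun j => R_eq ha hb (by omega) hχ hε₀ hε₁ c j) (mul_nonneg (mul_nonneg hC0 hA) hB)
  refine key.trans ?_
  have hx : 0 ≤ symNorm m₁ (s₀ + 4) a * symNorm m₂ (s₀ + 4) b * hsNorm s c :=
    mul_nonneg (mul_nonneg hA hB) hH
  linarith

end QLNLS
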